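/- arXiv:2012.10543 — 3 statements merged into one kernel-verified Lean document; each statement's English description precedes it below -/
import Mathlib

section
/- Let w:ℝ→ℝ be continuously differentiable and let φ:ℝ^{1+3}→ℂ be a smooth solution of □φ=F such that lim_{|x|→∞}|x|^{3/2}φ(t,x)w(r−t)^{1/2}=0 for each t, and assume all integrals below converge absolutely. Then for all t₁≤t₂: E^w[φ](t₁) = E^w[φ](t₂) + ∫_{t₁}^{t₂}∫_{ℝ³} Re( (2/r)·(K̄₀(rφ))·conj(F) ) w(q) dx dt + ∫_{t₁}^{t₂}∫_{ℝ³} ( ⟨t+r⟩²|L(rφ)/r|² + ⟨t−r⟩²|∂̸φ|² ) w′(q) dx dt, where K̄₀ = (⟨t+r⟩² L + ⟨t−r⟩² L̲)/2 acts as a vector field on the function rφ. -/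
noncomputable section

open Real MeasureTheory Filter
open scoped RealInnerProductSpace Topology

/-- Spatial points: `ℝ³` with the Euclidean norm. -/
abbrev Pt : Type := EuclideanSpace ℝ (Fin 3)

/-- `r = |x|`. -/
def rad (x : Pt) : ℝ := ‖x‖

/-- Japanese bracket `⟨a⟩ = (1+a²)^{1/2}`. -/
def jb (a : ℝ) : ℝ := Real.sqrt (1 + a ^ 2)

/-- `∂_t`. -/
def dT (f : ℝ → Pt → ℂ) : ℝ → Pt → ℂ := fun t x => deriv (fun s => f s x) t

/-- `∂_i`. -/
def dX (i : Fin 3) (f : ℝ → Pt → ℂ) : ℝ → Pt → ℂ :=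
  fun t x => fderiv ℝ (fun y => f t y) x (EuclideanSpace.single i 1)

/-- `∂_r = Σ (x_i/r) ∂_i`. -/
def dR (f : ℝ → Pt → ℂ) : ℝ → Pt → ℂ :=
  fun t x => ((rad x : ℝ) : ℂ)⁻¹ * ∑ i, ((x i : ℝ) : ℂ) * dX i f t x

/-- `L = ∂_t + ∂_r`. -/
def dL (f : ℝ → Pt → ℂ) : ℝ → Pt → ℂ := fun t x => dT f t x + dR f t x

/-- `L̲ = ∂_t − ∂_r`. -/
def dLbar (f : ℝ → Pt → ℂ) : ℝ → Pt → ℂ := fun t x => dT f t x - dR f t x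

/-- angular derivative `∂̸_i = ∂_i − ω_i ∂_r`. -/
def dAng (i : Fin 3) (f : ℝ → Pt → ℂ) : ℝ → Pt → ℂ :=
  fun t x => dX i f t x - ((x i / rad x : ℝ) : ℂ) * dR f t x

/-- `|∂̸ f|²`. -/
def angSq (f : ℝ → Pt → ℂ) (t : ℝ) (x : Pt) : ℝ := ∑ i, ‖dAng i f t x‖ ^ 2

/-- multiplication by `r`. -/
def rmul (f : ℝ → Pt → ℂ) : ℝ → Pt → ℂ := fun t x => ((rad x : ℝ) : ℂ) * f t x

/-- `□ = −∂_t² + Δ`. -/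
def box (f : ℝ → Pt → ℂ) : ℝ → Pt → ℂ :=
  fun t x => - dT (dT f) t x + ∑ i, dX i (dX i f) t x

/-- rotation `Ω_{ij} = x_i ∂_j − x_j ∂_i`. -/
def vrot (i j : Fin 3) (f : ℝ → Pt → ℂ) : ℝ → Pt → ℂ :=
  fun t x => ((x i : ℝ) : ℂ) * dX j f t x - ((x j : ℝ) : ℂ) * dX i f t x

/-- boost `Ω_{0i} = t ∂_i + x_i ∂_t`. -/
def vboost (i : Fin 3) (f : ℝ → Pt → ℂ) : ℝ → Pt → ℂ :=
  fun t x => (t : ℂ) * dX i f t x + ((x i : ℝ) : ℂ) * dT f t x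

/-- scaling `S = t ∂_t + r ∂_r`. -/
def vscal (f : ℝ → Pt → ℂ) : ℝ → Pt → ℂ :=
  fun t x => (t : ℂ) * dT f t x + ((rad x : ℝ) : ℂ) * dR f t x

/-- The commutator vector fields `Z`. -/
inductive VF : Type
  | time : VF
  | space : Fin 3 → VF
  | rot : Fin 3 → Fin 3 → VF
  | boost : Fin 3 → VF
  | scal : VF
  deriving DecidableEq, Fintype

/-- Action of a commutator vector field on a function. -/
def VF.app : VF → (ℝ → Pt → ℂ) → (ℝ → Pt → ℂ)
  | time => dT
  | space i => dX i
  | rot i j => vrot i j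
  | boost i => vboost i
  | scal => vscal

/-- `Z^I` for a multiindex `I` (a list of vector fields). -/
def Ziter : List VF → (ℝ → Pt → ℂ) → ℝ → Pt → ℂ
  | [], f => f
  | z :: l, f => z.app (Ziter l f)

/-- `C^∞` smoothness for a function of `(t,x)`. -/
def Smooth2 (f : ℝ → Pt → ℂ) : Prop := ContDiff ℝ (⊤ : ℕ∞) (Function.uncurry f)

/-- real-valued versions of the derivative operators -/
def dTR (f : ℝ → Pt → ℝ) : ℝ → Pt → ℝ := fun t x => deriv (fun s => f s x) t

def dXR (i : Fin 3) (f : ℝ → Pt → ℝ) : ℝ → Pt → ℝ :=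
  fun t x => fderiv ℝ (fun y => f t y) x (EuclideanSpace.single i 1)

def boxR (f : ℝ → Pt → ℝ) : ℝ → Pt → ℝ :=
  fun t x => - dTR (dTR f) t x + ∑ i, dXR i (dXR i f) t x

/-- `∂_q` acting on radiation fields `F(q,ω)`. -/
def dq (F : ℝ → Pt → ℂ) : ℝ → Pt → ℂ := fun q ω => deriv (fun s => F s ω) q

/-- `∂_{ω_i}` acting on radiation fields. -/
def dOm (i : Fin 3) (F : ℝ → Pt → ℂ) : ℝ → Pt → ℂ :=
  fun q ω => fderiv ℝ (fun y => F q y) ω (EuclideanSpace.single i 1)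

/-- angular rotation `ω_i ∂_{ω_j} − ω_j ∂_{ω_i}` on radiation fields. -/
def aRot (i j : Fin 3) (F : ℝ → Pt → ℂ) : ℝ → Pt → ℂ :=
  fun q ω => ((ω i : ℝ) : ℂ) * dOm j F q ω - ((ω j : ℝ) : ℂ) * dOm i F q ω

/-- `⟨q⟩∂_q` on radiation fields. -/
def qdq (F : ℝ → Pt → ℂ) : ℝ → Pt → ℂ := fun q ω => ((jb q : ℝ) : ℂ) * dq F q ω

/-- `q∂_q` on radiation fields. -/
def qmdq (F : ℝ → Pt → ℂ) : ℝ → Pt → ℂ := fun q ω => (q : ℂ) * dq F q ω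

/-- iterated angular derivatives `∂_ω^α` (as iterated rotations). -/
def aIter : List (Fin 3 × Fin 3) → (ℝ → Pt → ℂ) → ℝ → Pt → ℂ
  | [], F => F
  | p :: l, F => aRot p.1 p.2 (aIter l F)

/-- `‖F‖_{N,∞,γ} ≤ ε`, stated term by term: every seminorm
`sup |(⟨q⟩∂_q)^k ∂_ω^α F| ⟨q⟩^γ` with `k+|α| ≤ N` is at most `ε`. -/
def RadBound (N : ℕ) (γ ε : ℝ) (F : ℝ → Pt → ℂ) : Prop :=
  ∀ (k : ℕ) (l : List (Fin 3 × Fin 3)), k + l.length ≤ N →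
    ∀ (q : ℝ) (ω : Pt), rad ω = 1 →
      ‖(qdq^[k]) (aIter l F) q ω‖ * jb q ^ γ ≤ ε

/-- spacetime indices `α ∈ {0,1,2,3}`: `none` is the time index. -/
abbrev Ix : Type := Option (Fin 3)

/-- `L^α(ω) = (1, ω)`. -/
def Lup : Ix → Pt → ℝ
  | none => fun _ => 1
  | some i => fun ω => ω i

/-- `L_α(ω) = (−1, ω)`. -/
def Llow : Ix → Pt → ℝ
  | none => fun _ => -1
  | some i => fun ω => ω i

/-- `∂_α`. -/
def pd : Ix → (ℝ → Pt → ℂ) → ℝ → Pt → ℂ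
  | none => dT
  | some i => dX i

/-- `∂_α` (real valued). -/
def pdR : Ix → (ℝ → Pt → ℝ) → ℝ → Pt → ℝ
  | none => dTR
  | some i => dXR i

/-- the surface measure on the unit sphere `S² ⊆ ℝ³`. -/
def sphM : Measure (Metric.sphere (0 : Pt) 1) := (volume : Measure Pt).toSphere

/-- weighted `L²` norm `(∫ |g(t,x)|² w(r−t) dx)^{1/2}`. -/
def sqL2 (w : ℝ → ℝ) (g : ℝ → Pt → ℂ) (t : ℝ) : ℝ :=
  Real.sqrt (∫ x : Pt, ‖g t x‖ ^ 2 * w (rad x - t))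


/-- energy density of the weighted conformal energy `E^w[φ](t)` -/
def eDens (w : ℝ → ℝ) (f : ℝ → Pt → ℂ) (t : ℝ) (x : Pt) : ℝ :=
  (jb (t + rad x) ^ 2 * ‖dL (rmul f) t x / ((rad x : ℝ) : ℂ)‖ ^ 2
    + (jb (t + rad x) ^ 2 + jb (t - rad x) ^ 2) * angSq f t x
    + jb (t - rad x) ^ 2 * ‖dLbar (rmul f) t x / ((rad x : ℝ) : ℂ)‖ ^ 2) * w (rad x - t)

/-- the weighted conformal energy `E^w[φ](t)` -/
def Ew (w : ℝ → ℝ) (f : ℝ → Pt → ℂ) (t : ℝ) : ℝ := (1 / 2) * ∫ x : Pt, eDens w f t x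

/-- `K̄₀(rφ) = (⟨t+r⟩² L(rφ) + ⟨t−r⟩² L̲(rφ))/2` -/
def K0r (f : ℝ → Pt → ℂ) : ℝ → Pt → ℂ := fun t x =>
  (((jb (t + rad x) ^ 2 : ℝ) : ℂ) * dL (rmul f) t x
    + ((jb (t - rad x) ^ 2 : ℝ) : ℂ) * dLbar (rmul f) t x) / 2

/-- the integrand `Re((2/r)·K̄₀(rφ)·conj F)·w(q)` -/
def bulk1 (w : ℝ → ℝ) (φ F : ℝ → Pt → ℂ) (t : ℝ) (x : Pt) : ℝ :=
  ((2 / ((rad x : ℝ) : ℂ)) * K0r φ t x * (starRingEnd ℂ) (F t x)).re * w (rad x - t)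

/-- the integrand `(⟨t+r⟩²|L(rφ)/r|² + ⟨t−r⟩²|∂̸φ|²)·w′(q)` -/
def bulk2 (w : ℝ → ℝ) (φ : ℝ → Pt → ℂ) (t : ℝ) (x : Pt) : ℝ :=
  (jb (t + rad x) ^ 2 * ‖dL (rmul φ) t x / ((rad x : ℝ) : ℂ)‖ ^ 2
    + jb (t - rad x) ^ 2 * angSq φ t x) * deriv w (rad x - t)

/-- unit vector in the time direction -/
def vT : ℝ × Pt := (1, 0)
/-- unit vector in the space direction -/
def vX (i : Fin 3) : ℝ × Pt := (0, EuclideanSpace.single i 1)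
/-- directional derivative -/
def dd (v : ℝ × Pt) (f : ℝ × Pt → ℝ) : ℝ × Pt → ℝ := fun p => fderiv ℝ f p v

def pC (t x y z : ℝ) : ℝ := 1 + t ^ 2 + (x ^ 2 + y ^ 2 + z ^ 2)

def pE (t x y z u ut u0 u1 u2 : ℝ) : ℝ :=
  (1 + t ^ 2 + (x ^ 2 + y ^ 2 + z ^ 2)) * ((x ^ 2 + y ^ 2 + z ^ 2) * (ut ^ 2 + (u0 ^ 2 + u1 ^ 2 + u2 ^ 2))
    + 2 * (x * u0 + y * u1 + z * u2) * u + u ^ 2)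
  + 4 * t * (x ^ 2 + y ^ 2 + z ^ 2) * ut * ((x * u0 + y * u1 + z * u2) + u)

def pK (t x y z u ut u0 u1 u2 xi ui : ℝ) : ℝ :=
  (x ^ 2 + y ^ 2 + z ^ 2) * (2 * (1 + t ^ 2 + (x ^ 2 + y ^ 2 + z ^ 2)) * ut * ui
    + 4 * t * ((x * u0 + y * u1 + z * u2) + u) * ui
    + 2 * t * xi * (ut ^ 2 - (u0 ^ 2 + u1 ^ 2 + u2 ^ 2)))
  + 2 * t * xi * u ^ 2 + 2 * (1 + t ^ 2 + (x ^ 2 + y ^ 2 + z ^ 2)) * xi * u * ut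

def pR (t x y z u ut u0 u1 u2 : ℝ) : ℝ :=
  2 * (1 + t ^ 2 + (x ^ 2 + y ^ 2 + z ^ 2)) * ut * ((x * u0 + y * u1 + z * u2) + u)
  + 4 * t * (x * u0 + y * u1 + z * u2) ^ 2 + 4 * t * u * (x * u0 + y * u1 + z * u2) + 2 * t * u ^ 2
  + 2 * t * (x ^ 2 + y ^ 2 + z ^ 2) * (ut ^ 2 - (u0 ^ 2 + u1 ^ 2 + u2 ^ 2))

def pM (t x y z u ut u0 u1 u2 : ℝ) : ℝ :=
  2 * (1 + t ^ 2 + (x ^ 2 + y ^ 2 + z ^ 2)) * ut + 4 * t * ((x * u0 + y * u1 + z * u2) + u)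

lemma pE_deriv (x y z : ℝ) (t u ut u0 u1 u2 : ℝ → ℝ) (s t' u' ut' u0' u1' u2' : ℝ)
    (ht : HasDerivAt t t' s) (hu : HasDerivAt u u' s) (hut : HasDerivAt ut ut' s)
    (h0 : HasDerivAt u0 u0' s) (h1 : HasDerivAt u1 u1' s) (h2 : HasDerivAt u2 u2' s) :
    HasDerivAt (fun s => pE (t s) x y z (u s) (ut s) (u0 s) (u1 s) (u2 s))
      ((2 * t s * t') * ((x ^ 2 + y ^ 2 + z ^ 2) * (ut s ^ 2 + (u0 s ^ 2 + u1 s ^ 2 + u2 s ^ 2))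
    + 2 * (x * u0 s + y * u1 s + z * u2 s) * u s + u s ^ 2)
      + (1 + t s ^ 2 + (x ^ 2 + y ^ 2 + z ^ 2)) * ((x ^ 2 + y ^ 2 + z ^ 2) * (2 * ut s * ut' +
        (2 * u0 s * u0' + 2 * u1 s * u1' + 2 * u2 s * u2'))
    + 2 * (x * u0' + y * u1' + z * u2') * u s + 2 * (x * u0 s + y * u1 s + z * u2 s) * u' + 2 * u s * u')
      + 4 * t' * (x ^ 2 + y ^ 2 + z ^ 2) * ut s * ((x * u0 s + y * u1 s + z * u2 s) + u s)
      + 4 * t s * (x ^ 2 + y ^ 2 + z ^ 2) * ut' * ((x * u0 s + y * u1 s + z * u2 s) + u s)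
      + 4 * t s * (x ^ 2 + y ^ 2 + z ^ 2) * ut s * ((x * u0' + y * u1' + z * u2') + u')) s := by
  have hS := ((h0.const_mul x).add (h1.const_mul y)).add (h2.const_mul z)
  have hc := ((ht.pow 2).const_add 1).add_const (x ^ 2 + y ^ 2 + z ^ 2)
  have hg := ((h0.pow 2).add (h1.pow 2)).add (h2.pow 2)
  have := (hc.mul (((((hut.pow 2).add hg).const_mul (x ^ 2 + y ^ 2 + z ^ 2)).add
    ((hS.const_mul 2).mul hu)).add (hu.pow 2))).add
    ((((ht.const_mul 4).mul_const (x ^ 2 + y ^ 2 + z ^ 2)).mul hut).mul (hS.add hu))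
  refine this.congr_deriv ?_
  simp
  ring

lemma pK_deriv (t : ℝ) (x y z u ut u0 u1 u2 xi ui : ℝ → ℝ)
    (s x' y' z' u' ut' u0' u1' u2' xi' ui' : ℝ)
    (hx : HasDerivAt x x' s) (hy : HasDerivAt y y' s) (hz : HasDerivAt z z' s)
    (hu : HasDerivAt u u' s) (hut : HasDerivAt ut ut' s)
    (h0 : HasDerivAt u0 u0' s) (h1 : HasDerivAt u1 u1' s) (h2 : HasDerivAt u2 u2' s)
    (hxi : HasDerivAt xi xi' s) (hui : HasDerivAt ui ui' s) :
    HasDerivAt (fun s => pK t (x s) (y s) (z s) (u s) (ut s) (u0 s) (u1 s) (u2 s) (xi s) (ui s))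
      ((2 * x s * x' + 2 * y s * y' + 2 * z s * z') *
        (2 * (1 + t ^ 2 + (x s ^ 2 + y s ^ 2 + z s ^ 2)) * ut s * ui s
    + 4 * t * ((x s * u0 s + y s * u1 s + z s * u2 s) + u s) * ui s
    + 2 * t * xi s * (ut s ^ 2 - (u0 s ^ 2 + u1 s ^ 2 + u2 s ^ 2)))
      + (x s ^ 2 + y s ^ 2 + z s ^ 2) * (2 * (2 * x s * x' + 2 * y s * y' + 2 * z s * z') * ut s * ui s
        + 2 * (1 + t ^ 2 + (x s ^ 2 + y s ^ 2 + z s ^ 2)) * (ut' * ui s + ut s * ui')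
        + 4 * t * ((x' * u0 s + y' * u1 s + z' * u2 s) + (x s * u0' + y s * u1' + z s * u2') + u') * ui s
        + 4 * t * ((x s * u0 s + y s * u1 s + z s * u2 s) + u s) * ui'
        + 2 * t * xi' * (ut s ^ 2 - (u0 s ^ 2 + u1 s ^ 2 + u2 s ^ 2))
        + 2 * t * xi s * (2 * ut s * ut' - (2 * u0 s * u0' + 2 * u1 s * u1' + 2 * u2 s * u2')))
      + 2 * t * xi' * u s ^ 2 + 4 * t * xi s * u s * u'
      + 2 * (2 * x s * x' + 2 * y s * y' + 2 * z s * z') * xi s * u s * ut s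
      + 2 * (1 + t ^ 2 + (x s ^ 2 + y s ^ 2 + z s ^ 2)) *
        (xi' * u s * ut s + xi s * u' * ut s + xi s * u s * ut')) s := by
  have hr := ((hx.pow 2).add (hy.pow 2)).add (hz.pow 2)
  have hS := ((hx.mul h0).add (hy.mul h1)).add (hz.mul h2)
  have hc := hr.const_add (1 + t ^ 2)
  have hg := ((h0.pow 2).add (h1.pow 2)).add (h2.pow 2)
  have := ((hr.mul (((((hc.const_mul 2).mul hut).mul hui).add
    (((hS.add hu).const_mul (4 * t)).mul hui)).add
    ((hxi.const_mul (2 * t)).mul ((hut.pow 2).sub hg)))).add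
    ((hxi.const_mul (2 * t)).mul (hu.pow 2))).add
    ((((hc.const_mul 2).mul hxi).mul hu).mul hut)
  refine this.congr_deriv ?_
  simp
  ring

section real
variable (U : ℝ × Pt → ℝ)

def gE (p : ℝ × Pt) : ℝ := pE p.1 (p.2 0) (p.2 1) (p.2 2) (U p) (dd vT U p)
  (dd (vX 0) U p) (dd (vX 1) U p) (dd (vX 2) U p)
def gK (i : Fin 3) (p : ℝ × Pt) : ℝ := pK p.1 (p.2 0) (p.2 1) (p.2 2) (U p) (dd vT U p)
  (dd (vX 0) U p) (dd (vX 1) U p) (dd (vX 2) U p) (p.2 i) (dd (vX i) U p)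
def gR (p : ℝ × Pt) : ℝ := pR p.1 (p.2 0) (p.2 1) (p.2 2) (U p) (dd vT U p)
  (dd (vX 0) U p) (dd (vX 1) U p) (dd (vX 2) U p)
def gM (p : ℝ × Pt) : ℝ := pM p.1 (p.2 0) (p.2 1) (p.2 2) (U p) (dd vT U p)
  (dd (vX 0) U p) (dd (vX 1) U p) (dd (vX 2) U p)
def gBox (p : ℝ × Pt) : ℝ := - dd vT (dd vT U) p + ∑ i, dd (vX i) (dd (vX i) U) p
def r2 (p : ℝ × Pt) : ℝ := p.2 0 ^ 2 + p.2 1 ^ 2 + p.2 2 ^ 2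

variable {U}

lemma dd_contDiff {n m : ℕ∞} (h : m + 1 ≤ n) (hU : ContDiff ℝ n U) (v : ℝ × Pt) :
    ContDiff ℝ m (dd v U) := by
  have : ContDiff ℝ m (fderiv ℝ U) := hU.fderiv_right (by exact_mod_cast h)
  exact this.clm_apply contDiff_const

lemma dd_smooth (hU : ContDiff ℝ (⊤ : ℕ∞) U) (v : ℝ × Pt) : ContDiff ℝ (⊤ : ℕ∞) (dd v U) :=
  dd_contDiff (by simp) hU v

lemma dd_symm (hU : ContDiff ℝ (⊤ : ℕ∞) U) (v w : ℝ × Pt) (p : ℝ × Pt) :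
    dd v (dd w U) p = dd w (dd v U) p := by
  have hs : IsSymmSndFDerivAt ℝ U p :=
    hU.contDiffAt.isSymmSndFDerivAt (by simpa using (by exact_mod_cast le_top : ((2 : ℕ∞) : WithTop ℕ∞) ≤ ((⊤ : ℕ∞) : WithTop ℕ∞)))
  have h1 : ∀ a b : ℝ × Pt, dd a (dd b U) p = fderiv ℝ (fderiv ℝ U) p a b := by
    intro a b
    have hd : DifferentiableAt ℝ (fderiv ℝ U) p :=
      ((hU.fderiv_right (m := ((⊤ : ℕ∞) : WithTop ℕ∞)) (by simp)).differentiable (by simp)) p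
    unfold dd
    rw [fderiv_clm_apply hd (by fun_prop)]
    simp
  rw [h1, h1]
  exact hs v w

lemma hasDerivAt_line {f : ℝ × Pt → ℝ} {p : ℝ × Pt} (hf : DifferentiableAt ℝ f p) (v : ℝ × Pt) :
    HasDerivAt (fun s : ℝ => f (p + s • v)) (dd v f p) 0 :=
  hf.hasFDerivAt.hasLineDerivAt v

lemma contDiff_coord (i : Fin 3) {n : WithTop ℕ∞} : ContDiff ℝ n (fun p : ℝ × Pt => p.2 i) := by
  fun_prop

lemma gE_smooth (hU : ContDiff ℝ (⊤ : ℕ∞) U) : ContDiff ℝ (⊤ : ℕ∞) (gE U) := by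
  have a := dd_smooth hU vT
  have b := fun i => dd_smooth hU (vX i)
  have b0 := b 0
  have b1 := b 1
  have b2 := b 2
  unfold gE pE
  fun_prop

lemma gK_smooth (i : Fin 3) (hU : ContDiff ℝ (⊤ : ℕ∞) U) : ContDiff ℝ (⊤ : ℕ∞) (gK U i) := by
  have a := dd_smooth hU vT
  have b := fun i => dd_smooth hU (vX i)
  have b0 := b 0
  have b1 := b 1
  have b2 := b 2
  have b3 := b i
  unfold gK pK
  fun_prop

lemma gR_smooth (hU : ContDiff ℝ (⊤ : ℕ∞) U) : ContDiff ℝ (⊤ : ℕ∞) (gR U) := by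
  have a := dd_smooth hU vT
  have b := fun i => dd_smooth hU (vX i)
  have b0 := b 0
  have b1 := b 1
  have b2 := b 2
  unfold gR pR
  fun_prop

lemma gM_smooth (hU : ContDiff ℝ (⊤ : ℕ∞) U) : ContDiff ℝ (⊤ : ℕ∞) (gM U) := by
  have a := dd_smooth hU vT
  have b := fun i => dd_smooth hU (vX i)
  have b0 := b 0
  have b1 := b 1
  have b2 := b 2
  unfold gM pM
  fun_prop

lemma gBox_smooth (hU : ContDiff ℝ (⊤ : ℕ∞) U) : ContDiff ℝ (⊤ : ℕ∞) (gBox U) := by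
  have a := dd_smooth (dd_smooth hU vT) vT
  have b := fun i => dd_smooth (dd_smooth hU (vX i)) (vX i)
  unfold gBox
  exact a.neg.add (ContDiff.sum fun i _ => b i)

lemma r2_smooth : ContDiff ℝ (⊤ : ℕ∞) r2 := by
  unfold r2
  fun_prop

lemma div_identity (hU : ContDiff ℝ (⊤ : ℕ∞) U) (p : ℝ × Pt) :
    dd vT (gE U) p + r2 p * gM U p * gBox U p = ∑ i, dd (vX i) (gK U i) p - 2 * gR U p := by
  have dU : DifferentiableAt ℝ U p := hU.differentiable (by simp) p
  have dV : ∀ v, DifferentiableAt ℝ (dd v U) p := fun v => (dd_smooth hU v).differentiable (by simp) p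
  have hE : dd vT (gE U) p = _ := (hasDerivAt_line ((gE_smooth hU).differentiable (by simp) p) vT).unique
    (by
      have := pE_deriv (p.2 0) (p.2 1) (p.2 2) (fun s => p.1 + s) _ _ _ _ _ 0 1 _ _ _ _ _
        ((hasDerivAt_id (0:ℝ)).const_add _) (hasDerivAt_line dU vT) (hasDerivAt_line (dV vT) vT)
        (hasDerivAt_line (dV (vX 0)) vT) (hasDerivAt_line (dV (vX 1)) vT)
        (hasDerivAt_line (dV (vX 2)) vT)
      refine this.congr_of_eventuallyEq (Eventually.of_forall fun s => ?_)
      simp [gE, vT])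
  have hK : ∀ i, dd (vX i) (gK U i) p = _ := fun i =>
    (hasDerivAt_line ((gK_smooth i hU).differentiable (by simp) p) (vX i)).unique
    (by
      have hc : ∀ j : Fin 3, HasDerivAt (fun s : ℝ => p.2 j + s * (if j = i then 1 else 0))
          (if j = i then 1 else 0) 0 := fun j => by
        simpa using ((hasDerivAt_id (0:ℝ)).mul_const (if j = i then (1:ℝ) else 0)).const_add (p.2 j)
      have := pK_deriv p.1 _ _ _ _ _ _ _ _ _ _ 0 _ _ _ _ _ _ _ _ _ _
        (hc 0) (hc 1) (hc 2) (hasDerivAt_line dU (vX i)) (hasDerivAt_line (dV vT) (vX i))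
        (hasDerivAt_line (dV (vX 0)) (vX i)) (hasDerivAt_line (dV (vX 1)) (vX i))
        (hasDerivAt_line (dV (vX 2)) (vX i)) (hc i) (hasDerivAt_line (dV (vX i)) (vX i))
      refine this.congr_of_eventuallyEq (Eventually.of_forall fun s => ?_)
      simp [gK, vX, Pi.single_apply])
  rw [hE, Fin.sum_univ_three, hK 0, hK 1, hK 2]
  unfold gM gR gBox pM pR r2
  rw [Fin.sum_univ_three]
  rw [dd_symm hU (vX 0) vT, dd_symm hU (vX 1) vT, dd_symm hU (vX 2) vT, dd_symm hU (vX 1) (vX 0),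
    dd_symm hU (vX 2) (vX 0), dd_symm hU (vX 2) (vX 1)]
  simp
  ring

end real

lemma dd_space {f : ℝ × Pt → ℝ} (t : ℝ) (x : Pt) (hf : DifferentiableAt ℝ f (t, x)) (i : Fin 3) :
    dd (vX i) f (t, x) = fderiv ℝ (fun y => f (t, y)) x (EuclideanSpace.single i 1) := by
  have h := hf.hasFDerivAt.comp x (hasFDerivAt_prodMk_right t x)
  have h2 : fderiv ℝ (fun y => f (t, y)) x = _ := h.fderiv
  rw [h2]
  simp [dd, vX]

lemma dd_time {f : ℝ × Pt → ℝ} (t : ℝ) (x : Pt) (hf : DifferentiableAt ℝ f (t, x)) :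
    HasDerivAt (fun s => f (s, x)) (dd vT f (t, x)) t := by
  have h := (hf.hasFDerivAt.comp t (hasFDerivAt_prodMk_left t x)).hasDerivAt
  refine h.congr_deriv ?_
  simp [dd, vT]

lemma int_div_zero {g : Pt → ℝ} (hg : ContDiff ℝ 1 g) (R : ℝ) (h0 : ∀ x, R ≤ ‖x‖ → g x = 0)
    (v : Pt) : ∫ x in Metric.closedBall 0 R, fderiv ℝ g x v = 0 := by
  have hsupp : HasCompactSupport g := by
    refine HasCompactSupport.intro (isCompact_closedBall (0 : Pt) R) fun x hx => h0 x ?_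
    simp at hx
    exact hx.le
  have hc : Continuous (fun x => fderiv ℝ g x v) :=
    (hg.continuous_fderiv (by simp)).clm_apply continuous_const
  have hs' : HasCompactSupport (fun x => fderiv ℝ g x v) := hsupp.fderiv_apply ℝ v
  rw [setIntegral_eq_integral_of_forall_compl_eq_zero]
  · have := integral_mul_fderiv_eq_neg_fderiv_mul_of_integrable (μ := (volume : Measure Pt))
      (f := fun _ => (1 : ℝ)) (g := g) (v := v) (by simp)
      (by simpa using hc.integrable_of_hasCompactSupport hs')
      (by simpa using hg.continuous.integrable_of_hasCompactSupport hsupp)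
      (fun x _ => by fun_prop) (fun x _ => hg.differentiable (by simp) x)
    simpa using this
  · intro x hx
    simp at hx
    have : g =ᶠ[𝓝 x] fun _ => 0 := by
      have ho : IsOpen {y : Pt | R < ‖y‖} := isOpen_lt continuous_const continuous_norm
      filter_upwards [ho.mem_nhds hx] with y hy
      exact h0 y (le_of_lt hy)
    rw [this.fderiv_eq]
    simp

lemma core {U Y : ℝ × Pt → ℝ} (hU : ContDiff ℝ (⊤ : ℕ∞) U) (hY : ContDiff ℝ 1 Y)
    {t₁ t₂ : ℝ} (h12 : t₁ ≤ t₂) (R : ℝ)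
    (hR : ∀ t ∈ Set.Icc t₁ t₂, ∀ x : Pt, R ≤ ‖x‖ → Y (t, x) = 0) :
    (∫ x, gE U (t₁, x) * Y (t₁, x)) - (∫ x, gE U (t₂, x) * Y (t₂, x)) =
      ∫ p in Set.Ioc t₁ t₂ ×ˢ Metric.closedBall (0 : Pt) R,
        (- gE U p * dd vT Y p + ∑ i, gK U i p * dd (vX i) Y p
          + Y p * (r2 p * gM U p * gBox U p + 2 * gR U p)) := by
  have hE := gE_smooth hU
  have hK := fun i => gK_smooth i hU
  have hEY : ContDiff ℝ 1 (fun p => gE U p * Y p) := (hE.of_le (by simp)).mul hY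
  have hKY : ∀ i, ContDiff ℝ 1 (fun p => gK U i p * Y p) := fun i => ((hK i).of_le (by simp)).mul hY
  have hYd : Differentiable ℝ Y := hY.differentiable (by simp)
  have hmul : ∀ (f : ℝ × Pt → ℝ) (hf : ContDiff ℝ (⊤ : ℕ∞) f) v p,
      dd v (fun p => f p * Y p) p = f p * dd v Y p + dd v f p * Y p := by
    intro f hf v p
    unfold dd
    rw [fderiv_fun_mul (hf.differentiable (by simp) p) (hYd p)]
    simp [mul_comm]
  have hcont : ∀ f : ℝ × Pt → ℝ, ContDiff ℝ 1 f → ∀ v, Continuous (dd v f) := fun f hf v =>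
    (hf.continuous_fderiv (by simp)).clm_apply continuous_const
  have hIntg : ∀ f : ℝ × Pt → ℝ, Continuous f →
      IntegrableOn f (Set.Ioc t₁ t₂ ×ˢ Metric.closedBall (0 : Pt) R) := by
    intro f hf
    refine IntegrableOn.mono_set (t := Set.Icc t₁ t₂ ×ˢ Metric.closedBall (0 : Pt) R) ?_
      (Set.prod_mono Set.Ioc_subset_Icc_self le_rfl)
    exact hf.continuousOn.integrableOn_compact (isCompact_Icc.prod (isCompact_closedBall _ _))
  -- the time part
  have htime : (∫ x, gE U (t₂, x) * Y (t₂, x)) - (∫ x, gE U (t₁, x) * Y (t₁, x)) =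
      ∫ p in Set.Ioc t₁ t₂ ×ˢ Metric.closedBall (0 : Pt) R, dd vT (fun p => gE U p * Y p) p := by
    have hz : ∀ t ∈ Set.Icc t₁ t₂, (∫ x, gE U (t, x) * Y (t, x)) =
        ∫ x in Metric.closedBall (0 : Pt) R, gE U (t, x) * Y (t, x) := by
      intro t ht
      rw [setIntegral_eq_integral_of_forall_compl_eq_zero]
      intro x hx
      simp at hx
      rw [hR t ht x hx.le, mul_zero]
    rw [hz t₂ ⟨h12, le_rfl⟩, hz t₁ ⟨le_rfl, h12⟩, ← integral_sub]
    · rw [Measure.volume_eq_prod, setIntegral_prod _ (hIntg _ (hcont _ hEY vT)),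
        integral_integral_swap]
      · refine integral_congr_ae (Eventually.of_forall fun x => ?_)
        simp only
        rw [← intervalIntegral.integral_of_le h12]
        rw [intervalIntegral.integral_eq_sub_of_hasDerivAt
          (f := fun t => gE U (t, x) * Y (t, x))]
        · intro t _
          exact dd_time (f := fun p => gE U p * Y p) t x (hEY.differentiable (by simp) _)
        · refine Continuous.intervalIntegrable ?_ _ _
          exact (hcont _ hEY vT).comp (by fun_prop)
      · rw [Measure.prod_restrict]
        exact hIntg _ (hcont _ hEY vT)
    · refine ContinuousOn.integrableOn_compact (isCompact_closedBall _ _) ?_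
      exact (hEY.continuous.comp (by fun_prop : Continuous fun x : Pt => (t₂, x))).continuousOn
    · refine ContinuousOn.integrableOn_compact (isCompact_closedBall _ _) ?_
      exact (hEY.continuous.comp (by fun_prop : Continuous fun x : Pt => (t₁, x))).continuousOn
  have hspace : ∀ i, ∫ p in Set.Ioc t₁ t₂ ×ˢ Metric.closedBall (0 : Pt) R,
      dd (vX i) (fun p => gK U i p * Y p) p = 0 := by
    intro i
    rw [Measure.volume_eq_prod, setIntegral_prod _ (hIntg _ (hcont _ (hKY i) (vX i)))]
    rw [setIntegral_congr_fun (g := fun _ => (0 : ℝ)) measurableSet_Ioc]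
    · simp
    · intro t ht
      simp only
      have h1 : ∀ x, dd (vX i) (fun p => gK U i p * Y p) (t, x) =
          fderiv ℝ (fun y => gK U i (t, y) * Y (t, y)) x (EuclideanSpace.single i 1) := fun x =>
        dd_space t x ((hKY i).differentiable (by simp) _) i
      simp_rw [h1]
      refine int_div_zero ?_ R ?_ _
      · exact (hKY i).comp (by fun_prop : ContDiff ℝ 1 fun x : Pt => (t, x))
      · intro x hx
        rw [hR t ⟨ht.1.le, ht.2⟩ x hx, mul_zero]
  have hsum : ∫ p in Set.Ioc t₁ t₂ ×ˢ Metric.closedBall (0 : Pt) R,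
      ∑ i, dd (vX i) (fun p => gK U i p * Y p) p = 0 := by
    rw [integral_finsetSum _ fun i _ => hIntg _ (hcont _ (hKY i) (vX i))]
    simp [hspace]
  have : (∫ x, gE U (t₁, x) * Y (t₁, x)) - (∫ x, gE U (t₂, x) * Y (t₂, x)) =
      - (∫ p in Set.Ioc t₁ t₂ ×ˢ Metric.closedBall (0 : Pt) R, dd vT (fun p => gE U p * Y p) p)
      + ∫ p in Set.Ioc t₁ t₂ ×ˢ Metric.closedBall (0 : Pt) R,
      ∑ i, dd (vX i) (fun p => gK U i p * Y p) p := by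
    rw [hsum, ← htime]
    ring
  rw [this, ← integral_neg, ← integral_add (hIntg (fun p => - dd vT (fun p => gE U p * Y p) p)
    (hcont _ hEY vT).neg)
    (hIntg _ (continuous_finsetSum _ fun i _ => hcont _ (hKY i) (vX i)))]
  refine integral_congr_ae (Eventually.of_forall fun p => ?_)
  simp only
  rw [hmul _ hE]
  simp_rw [hmul _ (hK _)]
  rw [Finset.sum_add_distrib, ← Finset.sum_mul]
  have := div_identity hU p
  have h2 : ∑ i, dd (vX i) (gK U i) p =
    dd vT (gE U) p + r2 p * gM U p * gBox U p + 2 * gR U p := by linarith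
  rw [h2]
  ring

lemma sum_gK (U : ℝ × Pt → ℝ) (p : ℝ × Pt) : ∑ i, gK U i p * p.2 i = r2 p * gR U p := by
  rw [Fin.sum_univ_three]
  unfold gK gR r2 pK pR
  ring

/-- a real component of a complex function -/
def part (l : ℂ →L[ℝ] ℝ) (f : ℝ → Pt → ℂ) : ℝ × Pt → ℝ := fun p => l (f p.1 p.2)

lemma dT_eq {f : ℝ → Pt → ℂ} (hf : Smooth2 f) (t : ℝ) (x : Pt) :
    dT f t x = fderiv ℝ (Function.uncurry f) (t, x) vT := by
  have hd : DifferentiableAt ℝ (Function.uncurry f) (t, x) := hf.differentiable (by simp) _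
  have h := (hd.hasFDerivAt.comp t (hasFDerivAt_prodMk_left t x)).hasDerivAt
  have h2 : deriv (fun s => f s x) t = _ := h.deriv
  unfold dT
  rw [h2]
  simp [vT]

lemma dX_eq {f : ℝ → Pt → ℂ} (hf : Smooth2 f) (i : Fin 3) (t : ℝ) (x : Pt) :
    dX i f t x = fderiv ℝ (Function.uncurry f) (t, x) (vX i) := by
  have hd : DifferentiableAt ℝ (Function.uncurry f) (t, x) := hf.differentiable (by simp) _
  have h := hd.hasFDerivAt.comp x (hasFDerivAt_prodMk_right t x)
  have h2 : fderiv ℝ (fun y => f t y) x = _ := h.fderiv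
  unfold dX
  rw [h2]
  simp [vX]

lemma smooth_fd {f : ℝ → Pt → ℂ} (hf : Smooth2 f) (v : ℝ × Pt) :
    ContDiff ℝ (⊤ : ℕ∞) (fun p => fderiv ℝ (Function.uncurry f) p v) := by
  have : ContDiff ℝ (⊤ : ℕ∞) (fderiv ℝ (Function.uncurry f)) := hf.fderiv_right (by simp)
  exact this.clm_apply contDiff_const

lemma dT_smooth {f : ℝ → Pt → ℂ} (hf : Smooth2 f) : Smooth2 (dT f) := by
  have : Function.uncurry (dT f) = fun p => fderiv ℝ (Function.uncurry f) p vT := by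
    funext p
    exact dT_eq hf p.1 p.2
  unfold Smooth2
  rw [this]
  exact smooth_fd hf _

lemma dX_smooth {f : ℝ → Pt → ℂ} (hf : Smooth2 f) (i : Fin 3) : Smooth2 (dX i f) := by
  have : Function.uncurry (dX i f) = fun p => fderiv ℝ (Function.uncurry f) p (vX i) := by
    funext p
    exact dX_eq hf i p.1 p.2
  unfold Smooth2
  rw [this]
  exact smooth_fd hf _

lemma part_smooth {f : ℝ → Pt → ℂ} (hf : Smooth2 f) (l : ℂ →L[ℝ] ℝ) :
    ContDiff ℝ (⊤ : ℕ∞) (part l f) := l.contDiff.comp hf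

lemma part_fd {f : ℝ → Pt → ℂ} (hf : Smooth2 f) (l : ℂ →L[ℝ] ℝ) (v p : ℝ × Pt) :
    dd v (part l f) p = l (fderiv ℝ (Function.uncurry f) p v) := by
  have hd : DifferentiableAt ℝ (Function.uncurry f) p := hf.differentiable (by simp) _
  have := (l.hasFDerivAt (x := Function.uncurry f p)).comp p hd.hasFDerivAt
  have h2 : fderiv ℝ (part l f) p = _ := this.fderiv
  unfold dd
  rw [h2]
  simp

lemma part_dT {f : ℝ → Pt → ℂ} (hf : Smooth2 f) (l : ℂ →L[ℝ] ℝ) :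
    part l (dT f) = dd vT (part l f) := by
  funext p
  rw [part_fd hf, ← dT_eq hf]
  rfl

lemma part_dX {f : ℝ → Pt → ℂ} (hf : Smooth2 f) (i : Fin 3) (l : ℂ →L[ℝ] ℝ) :
    part l (dX i f) = dd (vX i) (part l f) := by
  funext p
  rw [part_fd hf, ← dX_eq hf]
  rfl

lemma part_box {f : ℝ → Pt → ℂ} (hf : Smooth2 f) (l : ℂ →L[ℝ] ℝ) :
    part l (box f) = gBox (part l f) := by
  funext p
  unfold gBox
  simp_rw [← part_dT hf, ← part_dX hf, ← part_dT (dT_smooth hf), ← part_dX (dX_smooth hf _)]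
  simp [part, box]

lemma norm_coord_sq (x : Pt) : ‖x‖ ^ 2 = x 0 ^ 2 + x 1 ^ 2 + x 2 ^ 2 := by
  rw [EuclideanSpace.norm_sq_eq, Fin.sum_univ_three]
  simp

lemma fderiv_norm_single (x : Pt) (hx : x ≠ 0) (i : Fin 3) :
    HasFDerivAt (fun y : Pt => ‖y‖) (fderiv ℝ (fun y : Pt => ‖y‖) x) x ∧
    fderiv ℝ (fun y : Pt => ‖y‖) x (EuclideanSpace.single i 1) = x i / ‖x‖ := by
  have hn : DifferentiableAt ℝ (fun y : Pt => ‖y‖) x := (contDiffAt_norm ℝ hx (n := 1)).differentiableAt (by simp)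
  refine ⟨hn.hasFDerivAt, ?_⟩
  have h1 := (hn.hasFDerivAt.pow 2).fderiv
  have h2 := ((hasStrictFDerivAt_norm_sq (F := Pt) x).hasFDerivAt).fderiv
  rw [h1] at h2
  have h4 := congrArg (fun l => l (EuclideanSpace.single i 1)) h2
  have hx' : ‖x‖ ≠ 0 := norm_ne_zero_iff.2 hx
  simp [EuclideanSpace.inner_single_right] at h4
  rw [eq_div_iff hx', mul_comm]
  linarith

/-- algebraic form of the angular part -/
lemma ang_alg (r a b c p0 p1 p2 : ℝ) (hr : r ≠ 0) (h : r ^ 2 = a ^ 2 + b ^ 2 + c ^ 2) :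
    (p0 - a / r * (r⁻¹ * (a * p0 + b * p1 + c * p2))) ^ 2
    + (p1 - b / r * (r⁻¹ * (a * p0 + b * p1 + c * p2))) ^ 2
    + (p2 - c / r * (r⁻¹ * (a * p0 + b * p1 + c * p2))) ^ 2
    = p0 ^ 2 + p1 ^ 2 + p2 ^ 2 - (r⁻¹) ^ 2 * (a * p0 + b * p1 + c * p2) ^ 2 := by
  field_simp
  linear_combination (-(a * p0 + b * p1 + c * p2) ^ 2) * h

section link
variable {φ : ℝ → Pt → ℂ}

lemma dX_rmul (hφ : Smooth2 φ) (i : Fin 3) (t : ℝ) (x : Pt) (hx : x ≠ 0) :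
    dX i (rmul φ) t x = ((x i / ‖x‖ : ℝ) : ℂ) * φ t x + ((‖x‖ : ℝ) : ℂ) * dX i φ t x := by
  obtain ⟨h1, h2⟩ := fderiv_norm_single x hx i
  have hd : DifferentiableAt ℝ (fun y => φ t y) x :=
    (hφ.differentiable (by simp) (t, x)).comp x (by fun_prop : DifferentiableAt ℝ (fun y : Pt => (t, y)) x)
  have h3 := (Complex.ofRealCLM.hasFDerivAt.comp x h1).mul hd.hasFDerivAt
  have h4 : fderiv ℝ (fun y => rmul φ t y) x = _ := h3.fderiv
  unfold dX
  rw [h4]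
  simp [h2]
  ring

lemma dR_rmul (hφ : Smooth2 φ) (t : ℝ) (x : Pt) (hx : x ≠ 0) :
    dR (rmul φ) t x = φ t x + ∑ i, ((x i : ℝ) : ℂ) * dX i φ t x := by
  have hx' : ‖x‖ ≠ 0 := norm_ne_zero_iff.2 hx
  have hx'' : ((‖x‖ : ℝ) : ℂ) ≠ 0 := by exact_mod_cast hx'
  unfold dR rad
  simp_rw [dX_rmul hφ _ t x hx]
  have h := norm_coord_sq x
  have h' : ((‖x‖ : ℝ) : ℂ) ^ 2 = (x 0 : ℂ) ^ 2 + (x 1 : ℂ) ^ 2 + (x 2 : ℂ) ^ 2 := by exact_mod_cast h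
  rw [Fin.sum_univ_three, Fin.sum_univ_three]
  push_cast
  field_simp
  linear_combination (-φ t x) * h'

lemma dT_rmul (t : ℝ) (x : Pt) : dT (rmul φ) t x = ((‖x‖ : ℝ) : ℂ) * dT φ t x := by
  unfold dT rmul rad
  exact deriv_const_mul_field _

/-- coefficient of the outgoing null flux -/
def A0 (φ : ℝ → Pt → ℂ) (t : ℝ) (x : Pt) : ℝ :=
  jb (t + rad x) ^ 2 * ‖dL (rmul φ) t x / ((rad x : ℝ) : ℂ)‖ ^ 2 + jb (t - rad x) ^ 2 * angSq φ t x
/-- coefficient of the incoming null flux -/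
def B0 (φ : ℝ → Pt → ℂ) (t : ℝ) (x : Pt) : ℝ :=
  jb (t - rad x) ^ 2 * ‖dLbar (rmul φ) t x / ((rad x : ℝ) : ℂ)‖ ^ 2 + jb (t + rad x) ^ 2 * angSq φ t x

lemma jb_sq (a : ℝ) : jb a ^ 2 = 1 + a ^ 2 := Real.sq_sqrt (by positivity)

lemma angSq_nonneg (t : ℝ) (x : Pt) : 0 ≤ angSq φ t x := by
  unfold angSq
  positivity

lemma A0_nonneg (t : ℝ) (x : Pt) : 0 ≤ A0 φ t x := by
  unfold A0
  have := angSq_nonneg (φ := φ) t x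
  positivity

lemma B0_nonneg (t : ℝ) (x : Pt) : 0 ≤ B0 φ t x := by
  unfold B0
  have := angSq_nonneg (φ := φ) t x
  positivity

lemma eDens_eq (w : ℝ → ℝ) (t : ℝ) (x : Pt) :
    eDens w φ t x = (A0 φ t x + B0 φ t x) * w (rad x - t) := by
  unfold eDens A0 B0
  ring

lemma bulk2_eq (w : ℝ → ℝ) (t : ℝ) (x : Pt) :
    bulk2 w φ t x = A0 φ t x * deriv w (rad x - t) := rfl

lemma angSq_eq (t : ℝ) (x : Pt) (hx : x ≠ 0) :
    angSq φ t x = (dX 0 φ t x).re ^ 2 + (dX 1 φ t x).re ^ 2 + (dX 2 φ t x).re ^ 2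
      - (‖x‖⁻¹) ^ 2 * (x 0 * (dX 0 φ t x).re + x 1 * (dX 1 φ t x).re + x 2 * (dX 2 φ t x).re) ^ 2
      + ((dX 0 φ t x).im ^ 2 + (dX 1 φ t x).im ^ 2 + (dX 2 φ t x).im ^ 2
      - (‖x‖⁻¹) ^ 2 * (x 0 * (dX 0 φ t x).im + x 1 * (dX 1 φ t x).im + x 2 * (dX 2 φ t x).im) ^ 2) := by
  have hr : ‖x‖ ≠ 0 := norm_ne_zero_iff.2 hx
  have hinv2 : ((‖x‖ : ℝ) : ℂ)⁻¹ = ((‖x‖⁻¹ : ℝ) : ℂ) := by push_cast; rfl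
  have h := norm_coord_sq x
  rw [← ang_alg ‖x‖ _ _ _ _ _ _ hr h, ← ang_alg ‖x‖ _ _ _ _ _ _ hr h]
  unfold angSq dAng dR rad
  simp only [Fin.sum_univ_three, hinv2, Complex.sq_norm, Complex.normSq_apply, Complex.mul_re,
    Complex.mul_im, Complex.add_re, Complex.add_im, Complex.sub_re, Complex.sub_im,
    Complex.ofReal_re, Complex.ofReal_im]
  ring

lemma link (hφ : Smooth2 φ) (t : ℝ) (x : Pt) (hx : x ≠ 0) :
    ‖x‖ ^ 2 * (A0 φ t x + B0 φ t x) =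
      2 * (gE (part Complex.reCLM φ) (t, x) + gE (part Complex.imCLM φ) (t, x)) ∧
    ‖x‖ * (A0 φ t x - B0 φ t x) =
      2 * (gR (part Complex.reCLM φ) (t, x) + gR (part Complex.imCLM φ) (t, x)) ∧
    ∀ z : ℂ, ((2 / ((rad x : ℝ) : ℂ)) * K0r φ t x * (starRingEnd ℂ) z).re =
      gM (part Complex.reCLM φ) (t, x) * z.re + gM (part Complex.imCLM φ) (t, x) * z.im := by
  have hr : ‖x‖ ≠ 0 := norm_ne_zero_iff.2 hx
  have hrc : ((‖x‖ : ℝ) : ℂ) ≠ 0 := by exact_mod_cast hr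
  have h := norm_coord_sq x
  have hT : ∀ l, dd vT (part l φ) (t, x) = l (dT φ t x) := fun l => by rw [← part_dT hφ]; rfl
  have hX : ∀ l i, dd (vX i) (part l φ) (t, x) = l (dX i φ t x) := fun l i => by
    rw [← part_dX hφ]; rfl
  have hP : ∀ l, part l φ (t, x) = l (φ t x) := fun l => rfl
  unfold A0 B0 K0r gE gR gM
  simp only [hT, hX, hP, Complex.reCLM_apply, Complex.imCLM_apply, jb_sq]
  rw [angSq_eq t x hx]
  unfold dL dLbar
  rw [dR_rmul hφ t x hx, dT_rmul]
  unfold rad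
  simp only [Fin.sum_univ_three]
  generalize dT φ t x = pt
  generalize dX 0 φ t x = p0
  generalize dX 1 φ t x = p1
  generalize dX 2 φ t x = p2
  generalize φ t x = p
  generalize x 0 = a at *
  generalize x 1 = b at *
  generalize x 2 = c at *
  generalize ‖x‖ = r at *
  obtain ⟨pt, qt⟩ := pt
  obtain ⟨p0, q0⟩ := p0
  obtain ⟨p1, q1⟩ := p1
  obtain ⟨p2, q2⟩ := p2
  obtain ⟨p, q⟩ := p
  have hinv : ∀ z : ℂ, z / (r : ℂ) = ((r⁻¹ : ℝ) : ℂ) * z := fun z => by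
    push_cast; field_simp
  have hinv2 : (r : ℂ)⁻¹ = ((r⁻¹ : ℝ) : ℂ) := by push_cast; rfl
  have hd2 : ∀ z : ℂ, z / 2 = ((1 / 2 : ℝ) : ℂ) * z := fun z => by
    push_cast; ring
  simp only [hinv, hinv2, hd2, Complex.sq_norm, Complex.normSq_apply, Complex.mul_re, Complex.mul_im,
    Complex.add_re, Complex.add_im, Complex.sub_re, Complex.sub_im, Complex.ofReal_re,
    Complex.ofReal_im, Complex.conj_re, Complex.conj_im]
  unfold pE pR pM
  rw [← h]
  simp only [zero_mul, sub_zero, add_zero, mul_zero]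
  refine ⟨?_, ?_, ?_⟩
  · field_simp
    ring
  · field_simp
    ring
  · intro z
    simp
    field_simp
    ring
end link

/-- cutoff vanishing near the origin -/
def eta (s : ℝ) : ℝ := Real.smoothTransition (s - 1)

lemma eta_contDiff {n : ℕ∞} : ContDiff ℝ n eta :=
  Real.smoothTransition.contDiff.comp (by fun_prop)

lemma eta_zero {s : ℝ} (h : s ≤ 1) : eta s = 0 :=
  Real.smoothTransition.zero_of_nonpos (by linarith)

lemma eta_one {s : ℝ} (h : 2 ≤ s) : eta s = 1 :=
  Real.smoothTransition.one_of_one_le (by linarith)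

lemma eta_hasDeriv (s : ℝ) : HasDerivAt eta (deriv eta s) s :=
  ((eta_contDiff (n := 1)).differentiable (by simp) s).hasDerivAt

lemma deriv_eta_zero {s : ℝ} (h : s < 1 ∨ 2 < s) : deriv eta s = 0 := by
  rcases h with h | h
  · have : eta =ᶠ[𝓝 s] fun _ => 0 := by
      filter_upwards [Iio_mem_nhds h] with y hy
      exact eta_zero (le_of_lt hy)
    rw [this.deriv_eq]
    simp
  · have : eta =ᶠ[𝓝 s] fun _ => 1 := by
      filter_upwards [Ioi_mem_nhds h] with y hy
      exact eta_one (le_of_lt hy)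
    rw [this.deriv_eq]
    simp

/-- reduced radial weight -/
def Wt (m : ℝ) (w α β : ℝ → ℝ) (t r : ℝ) : ℝ :=
  eta (m * r) * (w (r - t) * α (r - t) * β (r + t)) / r ^ 2

def Yt (m : ℝ) (w α β : ℝ → ℝ) (p : ℝ × Pt) : ℝ := Wt m w α β p.1 ‖p.2‖

section
variable {m : ℝ} {w α β : ℝ → ℝ}

lemma Yt_near_zero (hm : 0 < m) (t : ℝ) : Yt m w α β =ᶠ[𝓝 (t, (0 : Pt))] fun _ => 0 := by
  have ho : IsOpen {p : ℝ × Pt | m * ‖p.2‖ < 1} :=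
    isOpen_lt (by fun_prop) continuous_const
  filter_upwards [ho.mem_nhds (by simp : (t, (0 : Pt)) ∈ {p : ℝ × Pt | m * ‖p.2‖ < 1})] with p hp
  have hp' : m * ‖p.2‖ < 1 := hp
  simp [Yt, Wt, eta_zero hp'.le]

lemma Yt_contDiff (hm : 0 < m) (hw : ContDiff ℝ 1 w) (hα : ContDiff ℝ 1 α) (hβ : ContDiff ℝ 1 β) :
    ContDiff ℝ 1 (Yt m w α β) := by
  rw [contDiff_iff_contDiffAt]
  rintro ⟨t, x⟩
  by_cases hx : x = 0
  · subst hx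
    exact contDiffAt_const.congr_of_eventuallyEq (Yt_near_zero hm t)
  · have hn : ContDiffAt ℝ 1 (fun p : ℝ × Pt => ‖p.2‖) (t, x) :=
      ContDiffAt.norm ℝ contDiffAt_snd hx
    have ht : ContDiffAt ℝ 1 (fun p : ℝ × Pt => p.1) (t, x) := contDiffAt_fst
    have h1 : ContDiffAt ℝ 1 (fun p : ℝ × Pt => eta (m * ‖p.2‖)) (t, x) :=
      (eta_contDiff (n := 1)).contDiffAt.comp (t, x) (contDiffAt_const.mul hn)
    have h2 : ContDiffAt ℝ 1 (fun p : ℝ × Pt => w (‖p.2‖ - p.1)) (t, x) :=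
      hw.contDiffAt.comp (t, x) (hn.sub ht)
    have h3 : ContDiffAt ℝ 1 (fun p : ℝ × Pt => α (‖p.2‖ - p.1)) (t, x) :=
      hα.contDiffAt.comp (t, x) (hn.sub ht)
    have h4 : ContDiffAt ℝ 1 (fun p : ℝ × Pt => β (‖p.2‖ + p.1)) (t, x) :=
      hβ.contDiffAt.comp (t, x) (hn.add ht)
    exact (h1.mul ((h2.mul h3).mul h4)).div (hn.pow 2) (by simpa using hx)

lemma Yt_dT (hm : 0 < m) (hw : ContDiff ℝ 1 w) (hα : ContDiff ℝ 1 α) (hβ : ContDiff ℝ 1 β)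
    (t : ℝ) (x : Pt) :
    dd vT (Yt m w α β) (t, x) = eta (m * ‖x‖) *
      (-(deriv w (‖x‖ - t) * α (‖x‖ - t) + w (‖x‖ - t) * deriv α (‖x‖ - t)) * β (‖x‖ + t)
        + w (‖x‖ - t) * α (‖x‖ - t) * deriv β (‖x‖ + t)) / ‖x‖ ^ 2 := by
  have h := dd_time t x ((Yt_contDiff hm hw hα hβ).differentiable (by simp) (t, x))
  refine h.unique ?_
  have q1 : HasDerivAt (fun s : ℝ => ‖x‖ - s) (-1) t := (hasDerivAt_id t).const_sub _
  have q2 : HasDerivAt (fun s : ℝ => ‖x‖ + s) 1 t := (hasDerivAt_id t).const_add _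
  have a1 := (hw.differentiable (by simp) (‖x‖ - t)).hasDerivAt.comp t q1
  have a2 := (hα.differentiable (by simp) (‖x‖ - t)).hasDerivAt.comp t q1
  have a3 := (hβ.differentiable (by simp) (‖x‖ + t)).hasDerivAt.comp t q2
  have := (((a1.mul a2).mul a3).const_mul (eta (m * ‖x‖))).div_const (‖x‖ ^ 2)
  refine this.congr_deriv ?_
  simp
  ring

lemma Yt_dX (hm : 0 < m) (hw : ContDiff ℝ 1 w) (hα : ContDiff ℝ 1 α) (hβ : ContDiff ℝ 1 β)
    (t : ℝ) (x : Pt) (hx : x ≠ 0) (i : Fin 3) :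
    dd (vX i) (Yt m w α β) (t, x) = ((m * deriv eta (m * ‖x‖) *
        (w (‖x‖ - t) * α (‖x‖ - t) * β (‖x‖ + t)) + eta (m * ‖x‖) *
      ((deriv w (‖x‖ - t) * α (‖x‖ - t) + w (‖x‖ - t) * deriv α (‖x‖ - t)) * β (‖x‖ + t)
        + w (‖x‖ - t) * α (‖x‖ - t) * deriv β (‖x‖ + t))) / ‖x‖ ^ 3
        - 2 * (eta (m * ‖x‖) * (w (‖x‖ - t) * α (‖x‖ - t) * β (‖x‖ + t))) / ‖x‖ ^ 4) * x i := by
  rw [dd_space t x ((Yt_contDiff hm hw hα hβ).differentiable (by simp) (t, x))]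
  obtain ⟨hn, hn2⟩ := fderiv_norm_single x hx i
  have hr : ‖x‖ ≠ 0 := norm_ne_zero_iff.2 hx
  generalize hrr : ‖x‖ = r at *
  have q0 : HasDerivAt (fun s : ℝ => m * s) m r := by simpa using (hasDerivAt_id r).const_mul m
  have q1 : HasDerivAt (fun s : ℝ => s - t) 1 r := (hasDerivAt_id r).sub_const _
  have q2 : HasDerivAt (fun s : ℝ => s + t) 1 r := (hasDerivAt_id r).add_const _
  have a0 := (eta_hasDeriv (m * r)).comp r q0
  have a1 := (hw.differentiable (by simp) (r - t)).hasDerivAt.comp r q1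
  have a2 := (hα.differentiable (by simp) (r - t)).hasDerivAt.comp r q1
  have a3 := (hβ.differentiable (by simp) (r + t)).hasDerivAt.comp r q2
  have h := ((a0.mul ((a1.mul a2).mul a3)).div ((hasDerivAt_id r).pow 2) (by simpa using hr))
  have h' : HasDerivAt (Wt m w α β t) _ r := h
  subst hrr
  have h2 : fderiv ℝ (fun y => Yt m w α β (t, y)) x = _ := (h'.comp_hasFDerivAt x hn).fderiv
  rw [h2]
  simp [hn2]
  field_simp

lemma Yt_zero (hm : 0 < m) (t : ℝ) (v : ℝ × Pt) : Yt m w α β (t, 0) = 0 ∧ dd v (Yt m w α β) (t, 0) = 0 := by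
  refine ⟨(Yt_near_zero hm t).self_of_nhds, ?_⟩
  unfold dd
  rw [(Yt_near_zero hm t).fderiv_eq]
  simp

/-- the full cutoff -/
def cut (m : ℝ) (α β : ℝ → ℝ) (t : ℝ) (x : Pt) : ℝ :=
  eta (m * rad x) * α (rad x - t) * β (rad x + t)

def rhs (m : ℝ) (w α β : ℝ → ℝ) (φ F : ℝ → Pt → ℂ) (p : ℝ × Pt) : ℝ :=
  (bulk1 w φ F p.1 p.2 + bulk2 w φ p.1 p.2) * cut m α β p.1 p.2
  + eta (m * rad p.2) * (A0 φ p.1 p.2 * (w (rad p.2 - p.1) * deriv α (rad p.2 - p.1) * β (rad p.2 + p.1))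
    - B0 φ p.1 p.2 * (w (rad p.2 - p.1) * α (rad p.2 - p.1) * deriv β (rad p.2 + p.1)))
  + m * deriv eta (m * rad p.2) * (w (rad p.2 - p.1) * α (rad p.2 - p.1) * β (rad p.2 + p.1))
    * ((gR (part Complex.reCLM φ) p + gR (part Complex.imCLM φ) p) / rad p.2)

def cInt (U Y : ℝ × Pt → ℝ) (p : ℝ × Pt) : ℝ :=
  (- gE U p * dd vT Y p + ∑ i, gK U i p * dd (vX i) Y p
          + Y p * (r2 p * gM U p * gBox U p + 2 * gR U p))

lemma cInt_cont {U Y : ℝ × Pt → ℝ} (hU : ContDiff ℝ (⊤ : ℕ∞) U) (hY : ContDiff ℝ 1 Y) :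
    Continuous (cInt U Y) := by
  have hcont : ∀ v, Continuous (dd v Y) := fun v =>
    (hY.continuous_fderiv (by simp)).clm_apply continuous_const
  have h1 := (gE_smooth hU).continuous
  have h2 := fun i => (gK_smooth i hU).continuous
  have h3 := (gM_smooth hU).continuous
  have h4 := (gR_smooth hU).continuous
  have h5 := (gBox_smooth hU).continuous
  have h6 := r2_smooth.continuous
  have h7 := hY.continuous
  unfold cInt
  exact ((h1.neg.mul (hcont _)).add (continuous_finsetSum _ fun i _ => (h2 i).mul (hcont _))).add
    (h7.mul (((h6.mul h3).mul h5).add (continuous_const.mul h4)))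

lemma cInt_eq_rhs {φ F : ℝ → Pt → ℂ} (hφ : Smooth2 φ) (hbox : ∀ t x, box φ t x = F t x)
    (hm : 0 < m) (hw : ContDiff ℝ 1 w) (hα : ContDiff ℝ 1 α) (hβ : ContDiff ℝ 1 β) (p : ℝ × Pt) :
    cInt (part Complex.reCLM φ) (Yt m w α β) p + cInt (part Complex.imCLM φ) (Yt m w α β) p =
      rhs m w α β φ F p := by
  obtain ⟨t, x⟩ := p
  by_cases hx : x = 0
  · subst hx
    have h0 : eta 0 = 0 := eta_zero (by norm_num)
    have h1 : deriv eta 0 = 0 := deriv_eta_zero (by norm_num)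
    have hy : Yt m w α β (t, 0) = 0 := (Yt_zero hm t 0).1
    have hy2 : ∀ v, dd v (Yt m w α β) (t, 0) = 0 := fun v => (Yt_zero hm t v).2
    simp [cInt, rhs, cut, rad, hy, hy2, h0, h1]
  · obtain ⟨l1, l2, l3⟩ := link hφ t x hx
    have hr : ‖x‖ ≠ 0 := norm_ne_zero_iff.2 hx
    have hb : ∀ l, gBox (part l φ) (t, x) = l (F t x) := fun l => by
      rw [← part_box hφ, ← hbox]
      rfl
    have hs := fun U => sum_gK U (t, x)
    have hr2 : r2 (t, x) = ‖x‖ ^ 2 := (norm_coord_sq x).symm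
    unfold cInt rhs
    rw [Yt_dT hm hw hα hβ]
    simp_rw [Yt_dX hm hw hα hβ t x hx]
    have hs' : ∀ U c, ∑ i, gK U i (t, x) * (c * x i) = c * (‖x‖ ^ 2 * gR U (t, x)) := by
      intro U c
      rw [← hr2, ← hs, Finset.mul_sum]
      exact Finset.sum_congr rfl fun i _ => by ring
    simp_rw [hs']
    rw [hr2, hb, hb]
    unfold bulk1
    rw [bulk2_eq, l3]
    simp only [Complex.reCLM_apply, Complex.imCLM_apply, rad, cut, Yt, Wt]
    generalize gE (part Complex.reCLM φ) (t, x) = e1 at *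
    generalize gE (part Complex.imCLM φ) (t, x) = e2 at *
    generalize gR (part Complex.reCLM φ) (t, x) = f1 at *
    generalize gR (part Complex.imCLM φ) (t, x) = f2 at *
    generalize gM (part Complex.reCLM φ) (t, x) = m1 at *
    generalize gM (part Complex.imCLM φ) (t, x) = m2 at *
    have k1 : e1 = ‖x‖ ^ 2 * (A0 φ t x + B0 φ t x) / 2 - e2 := by linarith
    have k2 : f1 = ‖x‖ * (A0 φ t x - B0 φ t x) / 2 - f2 := by linarith
    rw [k1, k2]
    field_simp
    ring

lemma weighted {φ F : ℝ → Pt → ℂ} (hφ : Smooth2 φ) (hbox : ∀ t x, box φ t x = F t x)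
    (hm : 0 < m) (hw : ContDiff ℝ 1 w) (hα : ContDiff ℝ 1 α) (hβ : ContDiff ℝ 1 β)
    {t₁ t₂ : ℝ} (h12 : t₁ ≤ t₂) (R : ℝ)
    (hR : ∀ t ∈ Set.Icc t₁ t₂, ∀ r : ℝ, R ≤ r → α (r - t) * β (r + t) = 0) :
    IntegrableOn (rhs m w α β φ F) (Set.Ioc t₁ t₂ ×ˢ Metric.closedBall (0 : Pt) R) ∧
    (1 / 2) * (∫ x, eDens w φ t₁ x * cut m α β t₁ x) - (1 / 2) * (∫ x, eDens w φ t₂ x * cut m α β t₂ x) =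
      ∫ p in Set.Ioc t₁ t₂ ×ˢ Metric.closedBall (0 : Pt) R, rhs m w α β φ F p := by
  have hY := Yt_contDiff (m := m) hm hw hα hβ
  have hRY : ∀ t ∈ Set.Icc t₁ t₂, ∀ x : Pt, R ≤ ‖x‖ → Yt m w α β (t, x) = 0 := by
    intro t ht x hx
    have := hR t ht _ hx
    simp only [Yt, Wt]
    rw [mul_assoc (w _), this]
    simp
  have hu := part_smooth hφ Complex.reCLM
  have hv := part_smooth hφ Complex.imCLM
  have c1 := core hu hY h12 R hRY
  have c2 := core hv hY h12 R hRY
  have hIntg : ∀ f : ℝ × Pt → ℝ, Continuous f →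
      IntegrableOn f (Set.Ioc t₁ t₂ ×ˢ Metric.closedBall (0 : Pt) R) := by
    intro f hf
    refine IntegrableOn.mono_set (t := Set.Icc t₁ t₂ ×ˢ Metric.closedBall (0 : Pt) R) ?_
      (Set.prod_mono Set.Ioc_subset_Icc_self le_rfl)
    exact hf.continuousOn.integrableOn_compact (isCompact_Icc.prod (isCompact_closedBall _ _))
  have i1 := hIntg _ (cInt_cont hu hY)
  have i2 := hIntg _ (cInt_cont hv hY)
  have hfun : rhs m w α β φ F = fun p => cInt (part Complex.reCLM φ) (Yt m w α β) p
      + cInt (part Complex.imCLM φ) (Yt m w α β) p := by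
    funext p
    exact (cInt_eq_rhs hφ hbox hm hw hα hβ p).symm
  have hd : ∀ t x, eDens w φ t x * cut m α β t x =
      2 * (gE (part Complex.reCLM φ) (t, x) * Yt m w α β (t, x)
      + gE (part Complex.imCLM φ) (t, x) * Yt m w α β (t, x)) := by
    intro t x
    by_cases hx : x = 0
    · subst hx
      have h0 : eta 0 = 0 := eta_zero (by norm_num)
      simp [cut, rad, Yt, Wt, h0]
    · obtain ⟨l1, -, -⟩ := link hφ t x hx
      have hr : ‖x‖ ≠ 0 := norm_ne_zero_iff.2 hx
      rw [← add_mul, ← mul_assoc, ← l1, eDens_eq]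
      simp only [cut, Yt, Wt, rad]
      field_simp
  have hIntg2 : ∀ U : ℝ × Pt → ℝ, ContDiff ℝ (⊤ : ℕ∞) U → ∀ t ∈ Set.Icc t₁ t₂,
      Integrable (fun x => gE U (t, x) * Yt m w α β (t, x)) := by
    intro U hU t ht
    refine Continuous.integrable_of_hasCompactSupport ?_ ?_
    · exact ((gE_smooth hU).continuous.comp (by fun_prop)).mul (hY.continuous.comp (by fun_prop))
    · refine HasCompactSupport.intro (isCompact_closedBall (0 : Pt) R) fun x hx => ?_
      simp at hx
      rw [hRY t ht x hx.le, mul_zero]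
  refine ⟨hfun ▸ i1.add i2, ?_⟩
  have hs : ∀ t ∈ Set.Icc t₁ t₂, (1 / 2) * (∫ x, eDens w φ t x * cut m α β t x) =
      (∫ x, gE (part Complex.reCLM φ) (t, x) * Yt m w α β (t, x))
      + ∫ x, gE (part Complex.imCLM φ) (t, x) * Yt m w α β (t, x) := by
    intro t ht
    simp_rw [hd]
    rw [integral_const_mul, integral_add (hIntg2 _ hu t ht) (hIntg2 _ hv t ht)]
    ring
  rw [hs t₁ ⟨le_rfl, h12⟩, hs t₂ ⟨h12, le_rfl⟩, hfun, integral_add i1 i2]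
  have c1' : _ = ∫ p in Set.Ioc t₁ t₂ ×ˢ Metric.closedBall (0 : Pt) R,
    cInt (part Complex.reCLM φ) (Yt m w α β) p := c1
  have c2' : _ = ∫ p in Set.Ioc t₁ t₂ ×ˢ Metric.closedBall (0 : Pt) R,
    cInt (part Complex.imCLM φ) (Yt m w α β) p := c2
  rw [← c1', ← c2']
  ring
end

/-- smooth decreasing step -/
def stp (a d q : ℝ) : ℝ := 1 - Real.smoothTransition ((q - a) / d)

lemma stp_contDiff (a d : ℝ) : ContDiff ℝ 1 (stp a d) :=
  contDiff_const.sub ((Real.smoothTransition.contDiff (n := 1)).comp (by fun_prop))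

lemma stp_mem (a d q : ℝ) : 0 ≤ stp a d q ∧ stp a d q ≤ 1 := by
  have h1 := Real.smoothTransition.nonneg ((q - a) / d)
  have h2 := Real.smoothTransition.le_one ((q - a) / d)
  unfold stp
  constructor <;> linarith

lemma stp_one {a d q : ℝ} (hd : 0 < d) (h : q ≤ a) : stp a d q = 1 := by
  unfold stp
  rw [Real.smoothTransition.zero_of_nonpos (div_nonpos_of_nonpos_of_nonneg (by linarith) hd.le)]
  simp

lemma stp_zero {a d q : ℝ} (hd : 0 < d) (h : a + d ≤ q) : stp a d q = 0 := by
  unfold stp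
  rw [Real.smoothTransition.one_of_one_le ((one_le_div hd).2 (by linarith))]
  simp

lemma stp_deriv {a d : ℝ} (hd : 0 < d) (q : ℝ) : deriv (stp a d) q ≤ 0 := by
  have : Antitone (stp a d) := by
    intro x y h
    unfold stp
    have := Real.smoothTransition.monotone (show (x - a) / d ≤ (y - a) / d by gcongr)
    linarith
  exact this.deriv_nonpos

lemma stp_deriv_zero {a d q : ℝ} (hd : 0 < d) (h : q < a ∨ a + d < q) : deriv (stp a d) q = 0 := by
  rcases h with h | h
  · have : stp a d =ᶠ[𝓝 q] fun _ => 1 := by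
      filter_upwards [Iio_mem_nhds h] with y hy
      exact stp_one hd (le_of_lt hy)
    rw [this.deriv_eq]
    simp
  · have : stp a d =ᶠ[𝓝 q] fun _ => 0 := by
      filter_upwards [Ioi_mem_nhds h] with y hy
      exact stp_zero hd (le_of_lt hy)
    rw [this.deriv_eq]
    simp

lemma eta_mem (s : ℝ) : 0 ≤ eta s ∧ eta s ≤ 1 :=
  ⟨Real.smoothTransition.nonneg _, Real.smoothTransition.le_one _⟩

lemma err_bound {w : ℝ → ℝ} {φ : ℝ → Pt → ℂ} (hw : ContDiff ℝ 1 w) (hφ : Smooth2 φ) (t₁ t₂ : ℝ) :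
    ∃ C : ℝ, 0 ≤ C ∧ ∀ m : ℝ, 1 ≤ m → ∀ α β : ℝ → ℝ, (∀ q, 0 ≤ α q ∧ α q ≤ 1) →
      (∀ q, 0 ≤ β q ∧ β q ≤ 1) → ∀ p : ℝ × Pt, p.1 ∈ Set.Ioc t₁ t₂ →
      m * deriv eta (m * rad p.2) * (w (rad p.2 - p.1) * α (rad p.2 - p.1) * β (rad p.2 + p.1))
        * ((gR (part Complex.reCLM φ) p + gR (part Complex.imCLM φ) p) / rad p.2) ≤
      (Set.Ioc t₁ t₂ ×ˢ Metric.closedBall (0 : Pt) (2 / m)).indicator (fun _ => C * m ^ 2) p := by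
  have hu := part_smooth hφ Complex.reCLM
  have hv := part_smooth hφ Complex.imCLM
  obtain ⟨C1, h1⟩ := (isCompact_Icc (a := (1 : ℝ)) (b := 2)).exists_bound_of_continuousOn
    ((eta_contDiff (n := 1)).continuous_deriv (by simp)).continuousOn
  have hK : IsCompact (Set.Icc t₁ t₂ ×ˢ Metric.closedBall (0 : Pt) 2) :=
    isCompact_Icc.prod (isCompact_closedBall _ _)
  have hc : Continuous (fun p : ℝ × Pt => w (‖p.2‖ - p.1) *
      (gR (part Complex.reCLM φ) p + gR (part Complex.imCLM φ) p)) :=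
    (hw.continuous.comp (by fun_prop)).mul
      ((gR_smooth hu).continuous.add (gR_smooth hv).continuous)
  obtain ⟨C2, h2⟩ := hK.exists_bound_of_continuousOn hc.continuousOn
  have hC : 0 ≤ max C1 0 * max C2 0 := by positivity
  refine ⟨max C1 0 * max C2 0, hC, ?_⟩
  rintro m hm α β hα hβ ⟨t, x⟩ ht
  have hm0 : 0 < m := by linarith
  have hind : 0 ≤ (Set.Ioc t₁ t₂ ×ˢ Metric.closedBall (0 : Pt) (2 / m)).indicator
      (fun _ => max C1 0 * max C2 0 * m ^ 2) (t, x) :=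
    Set.indicator_nonneg (fun _ _ => by positivity) _
  simp only [rad] at *
  by_cases hr : m * ‖x‖ < 1 ∨ 2 < m * ‖x‖
  · rw [deriv_eta_zero hr]
    simpa using hind
  · push Not at hr
    obtain ⟨r1, r2⟩ := hr
    have hx2 : ‖x‖ ≤ 2 / m := by
      rw [le_div_iff₀ hm0]
      linarith
    have hx1 : ‖x‖ ≤ 2 := hx2.trans (div_le_self (by norm_num) hm)
    have hxp : 0 < ‖x‖ := by
      by_contra h
      nlinarith
    rw [Set.indicator_of_mem (by
      refine ⟨ht, ?_⟩
      simpa using hx2)]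
    have e1 : |deriv eta (m * ‖x‖)| ≤ max C1 0 := (h1 _ ⟨r1, r2⟩).trans (le_max_left _ _)
    have e2 : |w (‖x‖ - t) * (gR (part Complex.reCLM φ) (t, x) + gR (part Complex.imCLM φ) (t, x))|
        ≤ max C2 0 :=
      (h2 (t, x) ⟨⟨ht.1.le, ht.2⟩, by simpa using hx1⟩).trans (le_max_left _ _)
    have e3 : ‖x‖⁻¹ ≤ m := by
      rw [inv_le_iff_one_le_mul₀ hxp]
      exact r1
    have e4 : α (‖x‖ - t) * β (‖x‖ + t) ≤ 1 := mul_le_one₀ (hα _).2 (hβ _).1 (hβ _).2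
    have e5 : 0 ≤ α (‖x‖ - t) * β (‖x‖ + t) := mul_nonneg (hα _).1 (hβ _).1
    calc _ = (m * (α (‖x‖ - t) * β (‖x‖ + t)) * ‖x‖⁻¹) * (deriv eta (m * ‖x‖) *
          (w (‖x‖ - t) * (gR (part Complex.reCLM φ) (t, x) + gR (part Complex.imCLM φ) (t, x)))) := by
            rw [div_eq_mul_inv]; ring
      _ ≤ (m * (α (‖x‖ - t) * β (‖x‖ + t)) * ‖x‖⁻¹) * (max C1 0 * max C2 0) := by
            refine mul_le_mul_of_nonneg_left ?_ (by positivity)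
            refine (le_abs_self _).trans ?_
            rw [abs_mul]
            exact mul_le_mul e1 e2 (abs_nonneg _) (by positivity)
      _ ≤ (m * 1 * m) * (max C1 0 * max C2 0) := by gcongr
      _ = _ := by ring

lemma err_int (C t₁ t₂ : ℝ) (h12 : t₁ ≤ t₂) : ∃ D : ℝ, ∀ m : ℝ, 1 ≤ m →
    Integrable ((Set.Ioc t₁ t₂ ×ˢ Metric.closedBall (0 : Pt) (2 / m)).indicator
      (fun _ => C * m ^ 2)) ∧
    ∫ p, (Set.Ioc t₁ t₂ ×ˢ Metric.closedBall (0 : Pt) (2 / m)).indicator (fun _ => C * m ^ 2) p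
      = D / m := by
  refine ⟨C * (t₂ - t₁) * 8 * (volume : Measure Pt).real (Metric.closedBall 0 1), fun m hm => ?_⟩
  have hm0 : 0 < m := by linarith
  have hms : MeasurableSet (Set.Ioc t₁ t₂ ×ˢ Metric.closedBall (0 : Pt) (2 / m)) :=
    measurableSet_Ioc.prod measurableSet_closedBall
  constructor
  · rw [integrable_indicator_iff hms]
    refine integrableOn_const ?_
    rw [Measure.volume_eq_prod, Measure.prod_prod]
    exact ENNReal.mul_ne_top (by simp) (measure_closedBall_lt_top.ne)
  · rw [integral_indicator hms, setIntegral_const, Measure.volume_eq_prod, measureReal_prod_prod,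
      Measure.addHaar_real_closedBall' _ _ (by positivity)]
    simp [h12]
    field_simp
    norm_num
    try ring

lemma cut_cont (m : ℝ) {α β : ℝ → ℝ} (hα : ContDiff ℝ 1 α) (hβ : ContDiff ℝ 1 β) :
    Continuous (fun p : ℝ × Pt => cut m α β p.1 p.2) := by
  have h1 : Continuous eta := (eta_contDiff (n := 1)).continuous
  have h2 := hα.continuous
  have h3 := hβ.continuous
  unfold cut rad
  exact ((h1.comp (by fun_prop)).mul (h2.comp (by fun_prop))).mul (h3.comp (by fun_prop))

lemma cut_mem (m : ℝ) {α β : ℝ → ℝ} (hα : ∀ q, 0 ≤ α q ∧ α q ≤ 1) (hβ : ∀ q, 0 ≤ β q ∧ β q ≤ 1)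
    (t : ℝ) (x : Pt) : |cut m α β t x| ≤ 1 := by
  unfold cut
  obtain ⟨a1, a2⟩ := hα (rad x - t)
  obtain ⟨b1, b2⟩ := hβ (rad x + t)
  obtain ⟨c1, c2⟩ := eta_mem (m * rad x)
  rw [abs_of_nonneg (by positivity)]
  exact mul_le_one₀ (mul_le_one₀ c2 a1 a2) b1 b2

lemma cut_lim {α β : ℕ → ℝ → ℝ} (hα : ∀ q, ∀ᶠ n in atTop, α n q = 1)
    (hβ : ∀ q, ∀ᶠ n in atTop, β n q = 1) (t : ℝ) (x : Pt) (hx : x ≠ 0) :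
    Tendsto (fun n : ℕ => cut (n + 1) (α n) (β n) t x) atTop (𝓝 1) := by
  refine tendsto_const_nhds.congr' ?_
  have hr : 0 < ‖x‖ := norm_pos_iff.2 hx
  filter_upwards [hα (rad x - t), hβ (rad x + t), eventually_ge_atTop ⌈2 / ‖x‖⌉₊] with n h1 h2 h3
  have h4 : 2 / ‖x‖ ≤ n := (Nat.le_ceil _).trans (by exact_mod_cast h3)
  rw [div_le_iff₀ hr] at h4
  unfold cut
  rw [h1, h2, eta_one (by simp only [rad]; nlinarith)]
  simp

lemma limit_ineq {w : ℝ → ℝ} (hw : ContDiff ℝ 1 w)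
    {φ F : ℝ → Pt → ℂ} (hφ : Smooth2 φ)
    (hbox : ∀ t x, box φ t x = F t x)
    {t₁ t₂ : ℝ} (h12 : t₁ ≤ t₂)
    (hE : ∀ t ∈ Set.Icc t₁ t₂, Integrable (fun x : Pt => eDens w φ t x))
    (h1 : IntegrableOn (fun p : ℝ × Pt => bulk1 w φ F p.1 p.2)
      (Set.Ioc t₁ t₂ ×ˢ (Set.univ : Set Pt)))
    (h2 : IntegrableOn (fun p : ℝ × Pt => bulk2 w φ p.1 p.2)
      (Set.Ioc t₁ t₂ ×ˢ (Set.univ : Set Pt)))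
    (α β : ℕ → ℝ → ℝ) (R : ℕ → ℝ)
    (hα : ∀ n, ContDiff ℝ 1 (α n)) (hβ : ∀ n, ContDiff ℝ 1 (β n))
    (hα1 : ∀ n q, 0 ≤ α n q ∧ α n q ≤ 1) (hβ1 : ∀ n q, 0 ≤ β n q ∧ β n q ≤ 1)
    (hαl : ∀ q, ∀ᶠ n in atTop, α n q = 1) (hβl : ∀ q, ∀ᶠ n in atTop, β n q = 1)
    (hR : ∀ n, ∀ t ∈ Set.Icc t₁ t₂, ∀ r : ℝ, R n ≤ r → α n (r - t) * β n (r + t) = 0)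
    (sα : ∀ n q, w q * deriv (α n) q ≤ 0)
    (sβ : ∀ n, ∀ t ∈ Set.Icc t₁ t₂, ∀ r : ℝ, 0 ≤ r → 0 ≤ w (r - t) * deriv (β n) (r + t)) :
    Ew w φ t₁ ≤ Ew w φ t₂
      + (∫ t in Set.Ioc t₁ t₂, ∫ x : Pt, bulk1 w φ F t x)
      + (∫ t in Set.Ioc t₁ t₂, ∫ x : Pt, bulk2 w φ t x) := by
  set S : Set (ℝ × Pt) := Set.Ioc t₁ t₂ ×ˢ (Set.univ : Set Pt) with hS
  have hSm : MeasurableSet S := measurableSet_Ioc.prod MeasurableSet.univ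
  obtain ⟨C, hC, herr⟩ := err_bound hw hφ t₁ t₂
  obtain ⟨D, hD⟩ := err_int C t₁ t₂ h12
  have hm : ∀ n : ℕ, (1 : ℝ) ≤ (n : ℝ) + 1 := fun n => by
    have : (0 : ℝ) ≤ n := n.cast_nonneg
    linarith
  -- a single step
  have step : ∀ n : ℕ, (1 / 2) * (∫ x, eDens w φ t₁ x * cut (n + 1) (α n) (β n) t₁ x)
      - (1 / 2) * (∫ x, eDens w φ t₂ x * cut (n + 1) (α n) (β n) t₂ x) ≤
      (∫ p in S, (bulk1 w φ F p.1 p.2 + bulk2 w φ p.1 p.2) * cut (n + 1) (α n) (β n) p.1 p.2)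
        + D / ((n : ℝ) + 1) := by
    intro n
    obtain ⟨hi, he⟩ := weighted (m := (n : ℝ) + 1) hφ hbox (by linarith [hm n]) hw (hα n) (hβ n) h12
      (R n) (hR n)
    rw [he]
    set T : Set (ℝ × Pt) := Set.Ioc t₁ t₂ ×ˢ Metric.closedBall (0 : Pt) (R n) with hT
    have hTm : MeasurableSet T := measurableSet_Ioc.prod measurableSet_closedBall
    have hTS : T ⊆ S := Set.prod_mono le_rfl (Set.subset_univ _)
    obtain ⟨ei, ev⟩ := hD _ (hm n)
    have hbi : IntegrableOn (fun p : ℝ × Pt => (bulk1 w φ F p.1 p.2 + bulk2 w φ p.1 p.2) *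
        cut (n + 1) (α n) (β n) p.1 p.2) S := by
      refine Integrable.mul_bdd (c := 1) (h1.add h2) (cut_cont _ (hα n) (hβ n)).aestronglyMeasurable ?_
      exact Eventually.of_forall fun p => cut_mem _ (hα1 n) (hβ1 n) _ _
    rw [← ev]
    have hsplit : ∫ p in S, (bulk1 w φ F p.1 p.2 + bulk2 w φ p.1 p.2) *
        cut (n + 1) (α n) (β n) p.1 p.2 = ∫ p in T, (bulk1 w φ F p.1 p.2 + bulk2 w φ p.1 p.2) *
        cut (n + 1) (α n) (β n) p.1 p.2 := by
      refine setIntegral_eq_of_subset_of_forall_sdiff_eq_zero hSm hTS ?_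
      rintro ⟨t, x⟩ ⟨⟨ht, -⟩, hx⟩
      have hx' : R n ≤ rad x := by
        by_contra h
        exact hx ⟨ht, by simpa [rad] using (not_le.1 h).le⟩
      have := hR n t ⟨ht.1.le, ht.2⟩ _ hx'
      simp only [cut]
      rw [mul_assoc (eta _), this]
      simp
    rw [hsplit]
    refine le_trans ?_ (add_le_add_right (setIntegral_le_integral (s := T) ei ?_) _)
    · rw [← integral_add (hbi.mono_set hTS) ei.integrableOn]
      refine setIntegral_mono_on hi ((hbi.mono_set hTS).add ei.integrableOn) hTm ?_
      rintro ⟨t, x⟩ ⟨ht, -⟩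
      have b3 := herr _ (hm n) _ _ (hα1 n) (hβ1 n) (t, x) ht
      have s1 := sα n (rad x - t)
      have s2 := sβ n t ⟨ht.1.le, ht.2⟩ (rad x) (norm_nonneg _)
      have a0 : 0 ≤ A0 φ t x := A0_nonneg t x
      have b0 : 0 ≤ B0 φ t x := B0_nonneg t x
      have a1 := (hα1 n (rad x - t)).1
      have b1 := (hβ1 n (rad x + t)).1
      have e1 := (eta_mem (((n : ℝ) + 1) * rad x)).1
      have k1 : A0 φ t x * (w (rad x - t) * deriv (α n) (rad x - t) * β n (rad x + t)) ≤ 0 :=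
        mul_nonpos_of_nonneg_of_nonpos a0 (mul_nonpos_of_nonpos_of_nonneg s1 b1)
      have k2 : 0 ≤ B0 φ t x * (w (rad x - t) * α n (rad x - t) * deriv (β n) (rad x + t)) := by
        rw [mul_right_comm (w _)]
        exact mul_nonneg b0 (mul_nonneg s2 a1)
      have k3 := mul_nonpos_of_nonneg_of_nonpos e1 (sub_nonpos.2 (k1.trans k2))
      simp only [rhs] at *
      linarith
    · exact Eventually.of_forall fun p => Set.indicator_nonneg (fun _ _ => by positivity) _
  -- limits
  have limE : ∀ t ∈ Set.Icc t₁ t₂, Tendsto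
      (fun n : ℕ => (1 / 2) * (∫ x, eDens w φ t x * cut (n + 1) (α n) (β n) t x)) atTop
      (𝓝 (Ew w φ t)) := by
    intro t ht
    refine Tendsto.const_mul _ ?_
    refine tendsto_integral_of_dominated_convergence (fun x => |eDens w φ t x|) ?_ (hE t ht).abs ?_ ?_
    · intro n
      exact (hE t ht).1.mul
        ((cut_cont _ (hα n) (hβ n)).comp (by fun_prop : Continuous fun x : Pt => (t, x))).aestronglyMeasurable
    · intro n
      refine Eventually.of_forall fun x => ?_
      rw [Real.norm_eq_abs, abs_mul]
      exact mul_le_of_le_one_right (abs_nonneg _) (cut_mem _ (hα1 n) (hβ1 n) _ _)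
    · filter_upwards [compl_mem_ae_iff.2 (measure_singleton (0 : Pt))] with x hx
      simpa using (cut_lim hαl hβl t x hx).const_mul (eDens w φ t x)
  have limB : Tendsto (fun n : ℕ => ∫ p in S, (bulk1 w φ F p.1 p.2 + bulk2 w φ p.1 p.2) *
      cut (n + 1) (α n) (β n) p.1 p.2) atTop
      (𝓝 (∫ p in S, (bulk1 w φ F p.1 p.2 + bulk2 w φ p.1 p.2))) := by
    refine tendsto_integral_of_dominated_convergence
      (fun p => |bulk1 w φ F p.1 p.2 + bulk2 w φ p.1 p.2|) ?_ (h1.add h2).abs ?_ ?_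
    · intro n
      exact (h1.add h2).1.mul (cut_cont _ (hα n) (hβ n)).aestronglyMeasurable
    · intro n
      refine Eventually.of_forall fun x => ?_
      rw [Real.norm_eq_abs, abs_mul]
      exact mul_le_of_le_one_right (abs_nonneg _) (cut_mem _ (hα1 n) (hβ1 n) _ _)
    · have hnull : volume ((Set.univ : Set ℝ) ×ˢ ({0} : Set Pt)) = 0 := by
        rw [Measure.volume_eq_prod, Measure.prod_prod, measure_singleton, mul_zero]
      refine ae_restrict_of_ae ?_
      filter_upwards [compl_mem_ae_iff.2 hnull] with p hp
      have hx : p.2 ≠ 0 := fun h => hp ⟨trivial, h⟩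
      simpa using (cut_lim hαl hβl p.1 p.2 hx).const_mul (bulk1 w φ F p.1 p.2 + bulk2 w φ p.1 p.2)
  have limD : Tendsto (fun n : ℕ => D / ((n : ℝ) + 1)) atTop (𝓝 0) := by
    simpa using tendsto_const_nhds.div_atTop (a := D) (tendsto_natCast_atTop_atTop.atTop_add
      (tendsto_const_nhds (x := (1 : ℝ)))) 
  have fin := le_of_tendsto_of_tendsto' ((limE t₁ ⟨le_rfl, h12⟩).sub (limE t₂ ⟨h12, le_rfl⟩))
    (limB.add limD) step
  have it : ∀ f : ℝ × Pt → ℝ, IntegrableOn f S →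
      ∫ p in S, f p = ∫ t in Set.Ioc t₁ t₂, ∫ x : Pt, f (t, x) := by
    intro f hf
    have := setIntegral_prod (μ := (volume : Measure ℝ)) (ν := (volume : Measure Pt)) f
      (s := Set.Ioc t₁ t₂) (t := Set.univ) hf
    rw [Measure.volume_eq_prod, this]
    simp
  rw [integral_add h1 h2, it _ h1, it _ h2] at fin
  linarith

lemma main_ineq {w : ℝ → ℝ} (hw : ContDiff ℝ 1 w)
    {φ F : ℝ → Pt → ℂ} (hφ : Smooth2 φ)
    (hbox : ∀ t x, box φ t x = F t x)
    {t₁ t₂ : ℝ} (h12 : t₁ ≤ t₂)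
    (hE : ∀ t ∈ Set.Icc t₁ t₂, Integrable (fun x : Pt => eDens w φ t x))
    (h1 : IntegrableOn (fun p : ℝ × Pt => bulk1 w φ F p.1 p.2)
      (Set.Ioc t₁ t₂ ×ˢ (Set.univ : Set Pt)))
    (h2 : IntegrableOn (fun p : ℝ × Pt => bulk2 w φ p.1 p.2)
      (Set.Ioc t₁ t₂ ×ˢ (Set.univ : Set Pt))) :
    Ew w φ t₁ ≤ Ew w φ t₂
      + (∫ t in Set.Ioc t₁ t₂, ∫ x : Pt, bulk1 w φ F t x)
      + (∫ t in Set.Ioc t₁ t₂, ∫ x : Pt, bulk2 w φ t x) := by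
  have hone : ∀ q : ℝ, deriv (fun _ : ℝ => (1 : ℝ)) q = 0 := fun q => by simp
  by_cases hf : ∃ᶠ q in atTop, 0 < w q
  · have hex : ∀ n : ℕ, ∃ a d : ℝ, (n : ℝ) ≤ a ∧ 0 < d ∧ ∀ q, a ≤ q → q ≤ a + d → 0 < w q := by
      intro n
      obtain ⟨a, ha, hp⟩ := (frequently_atTop.1 hf) (n : ℝ)
      have hn : ∀ᶠ q in 𝓝 a, 0 < w q := hw.continuous.continuousAt.eventually (lt_mem_nhds hp)
      obtain ⟨e, he, hb⟩ := Metric.eventually_nhds_iff.1 hn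
      refine ⟨a, e / 2, ha, by positivity, fun q h1 h2 => hb ?_⟩
      rw [Real.dist_eq, abs_of_nonneg (by linarith)]
      linarith
    choose a d ha hd hpos using hex
    refine limit_ineq hw hφ hbox h12 hE h1 h2 (fun n => stp (a n) (d n)) (fun _ _ => 1)
      (fun n => a n + d n + t₂) (fun n => stp_contDiff _ _) (fun n => contDiff_const)
      (fun n q => stp_mem _ _ _) (fun n q => by norm_num) ?_ (fun q => by simp) ?_ ?_ ?_
    · intro q
      filter_upwards [eventually_ge_atTop ⌈q⌉₊] with n hn
      refine stp_one (hd n) ?_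
      exact ((Nat.le_ceil q).trans (by exact_mod_cast hn)).trans (ha n)
    · intro n t ht r hr
      rw [stp_zero (hd n) (by linarith [ht.2])]
      simp
    · intro n q
      by_cases hq : q < a n ∨ a n + d n < q
      · rw [stp_deriv_zero (hd n) hq]
        simp
      · push Not at hq
        exact mul_nonpos_of_nonneg_of_nonpos (hpos n q hq.1 hq.2).le (stp_deriv (hd n) q)
    · intro n t _ r _
      simp
  · have hev : ∀ᶠ q in atTop, w q ≤ 0 := by
      simpa [not_frequently] using hf
    obtain ⟨Q, hQ⟩ := eventually_atTop.1 hev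
    set N : ℝ := Q + 2 * t₂ with hN
    refine limit_ineq hw hφ hbox h12 hE h1 h2 (fun _ _ => 1) (fun n => stp (n + N) 1)
      (fun n => n + N + 1 - t₁) (fun n => contDiff_const) (fun n => stp_contDiff _ _)
      (fun n q => by norm_num) (fun n q => stp_mem _ _ _) (fun q => by simp) ?_ ?_ ?_ ?_
    · intro q
      filter_upwards [eventually_ge_atTop ⌈q - N⌉₊] with n hn
      refine stp_one one_pos ?_
      have := (Nat.le_ceil (q - N)).trans (show _ ≤ (n : ℝ) by exact_mod_cast hn)
      linarith
    · intro n t ht r hr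
      rw [stp_zero one_pos (by linarith [ht.1])]
      simp
    · intro n q
      simp
    · intro n t ht r hr
      by_cases hq : r + t < n + N
      · rw [stp_deriv_zero one_pos (Or.inl hq)]
        simp
      · push Not at hq
        have hn : (0 : ℝ) ≤ n := n.cast_nonneg
        refine mul_nonneg_of_nonpos_of_nonpos (hQ _ ?_) (stp_deriv one_pos _)
        linarith [ht.2]

lemma main_eq (w : ℝ → ℝ) (hw : ContDiff ℝ 1 w)
    (φ F : ℝ → Pt → ℂ) (hφ : Smooth2 φ)
    (hbox : ∀ t x, box φ t x = F t x)
    (t₁ t₂ : ℝ) (h12 : t₁ ≤ t₂)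
    (hE : ∀ t ∈ Set.Icc t₁ t₂, Integrable (fun x : Pt => eDens w φ t x))
    (h1 : IntegrableOn (fun p : ℝ × Pt => bulk1 w φ F p.1 p.2)
      (Set.Ioc t₁ t₂ ×ˢ (Set.univ : Set Pt)))
    (h2 : IntegrableOn (fun p : ℝ × Pt => bulk2 w φ p.1 p.2)
      (Set.Ioc t₁ t₂ ×ˢ (Set.univ : Set Pt))) :
    Ew w φ t₁ = Ew w φ t₂
      + (∫ t in Set.Ioc t₁ t₂, ∫ x : Pt, bulk1 w φ F t x)
      + (∫ t in Set.Ioc t₁ t₂, ∫ x : Pt, bulk2 w φ t x) := by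
  have e0 : ∀ t x, eDens (fun q => - w q) φ t x = - eDens w φ t x := fun t x => by
    simp only [eDens]; ring
  have e1 : ∀ t x, bulk1 (fun q => - w q) φ F t x = - bulk1 w φ F t x := fun t x => by
    simp only [bulk1]; ring
  have e2 : ∀ t x, bulk2 (fun q => - w q) φ t x = - bulk2 w φ t x := fun t x => by
    simp only [bulk2, deriv.fun_neg]; ring
  have i1 := main_ineq hw hφ hbox h12 hE h1 h2
  have i2 := main_ineq (w := fun q => - w q) hw.neg hφ hbox h12
    (fun t ht => by simp only [e0]; exact (hE t ht).neg)
    (by simp only [e1]; exact h1.neg) (by simp only [e2]; exact h2.neg)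
  simp only [Ew, e0, e1, e2, integral_neg] at i1 i2 ⊢
  linarith

/-- Proposition 2.2, weighted conformal Morawetz energy identity.
For a `C¹` weight `w` and a smooth solution `φ` of `□φ = F` decaying at spatial
infinity, with all the integrals absolutely convergent, one has, for `t₁ ≤ t₂`:
`E^w[φ](t₁) = E^w[φ](t₂) + ∫∫ Re((2/r)K̄₀(rφ) conj F) w + ∫∫ (⟨t+r⟩²|L(rφ)/r|² + ⟨t−r⟩²|∂̸φ|²) w′`. -/
theorem stmt1 (w : ℝ → ℝ) (hw : ContDiff ℝ 1 w)
    (φ F : ℝ → Pt → ℂ) (hφ : Smooth2 φ)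
    (hbox : ∀ t x, box φ t x = F t x)
    (hdecay : ∀ t : ℝ, Tendsto
      (fun x : Pt => rad x ^ ((3 : ℝ) / 2) * ‖φ t x‖ * Real.sqrt (w (rad x - t)))
      (Filter.cocompact Pt) (𝓝 0))
    (t₁ t₂ : ℝ) (h12 : t₁ ≤ t₂)
    (hE : ∀ t ∈ Set.Icc t₁ t₂, Integrable (fun x : Pt => eDens w φ t x))
    (h1 : IntegrableOn (fun p : ℝ × Pt => bulk1 w φ F p.1 p.2)
      (Set.Ioc t₁ t₂ ×ˢ (Set.univ : Set Pt)))
    (h2 : IntegrableOn (fun p : ℝ × Pt => bulk2 w φ p.1 p.2)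
      (Set.Ioc t₁ t₂ ×ˢ (Set.univ : Set Pt))) :
    Ew w φ t₁ = Ew w φ t₂
      + (∫ t in Set.Ioc t₁ t₂, ∫ x : Pt, bulk1 w φ F t x)
      + (∫ t in Set.Ioc t₁ t₂, ∫ x : Pt, bulk2 w φ t x) := by
  exact main_eq w hw φ F hφ hbox t₁ t₂ h12 hE h1 h2
end
end

section
/- Let w:ℝ→[0,∞) be locally Lipschitz with w′(q)≤0 for q≤0 and w′(q)=0 for q>0, and let φ be a smooth function with lim_{|x|→∞}|x|^{3/2}φ(t,x)=0. Then there is a universal constant C such that for each t: ∫_{ℝ³}|φ(t,x)|² w(q) dx ≤ C ∫_{ℝ³}( ⟨t+r⟩²|L(rφ)/r|² + ⟨t−r⟩²|L̲(rφ)/r|² ) w(q) dx. -/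
noncomputable section

open Real MeasureTheory Filter
open scoped RealInnerProductSpace Topology

/-- the Hardy density `⟨t+r⟩²|L(rφ)/r|² + ⟨t−r⟩²|L̲(rφ)/r|²` -/
def hDens (φ : ℝ → Pt → ℂ) (t : ℝ) (x : Pt) : ℝ :=
  jb (t + rad x) ^ 2 * ‖dL (rmul φ) t x / ((rad x : ℝ) : ℂ)‖ ^ 2
    + jb (t - rad x) ^ 2 * ‖dLbar (rmul φ) t x / ((rad x : ℝ) : ℂ)‖ ^ 2

lemma lintegral_polar (g : Pt → ENNReal) (hg : Measurable g) :
    ∫⁻ x, g x = ∫⁻ ω : Metric.sphere (0 : Pt) 1,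
      (∫⁻ r in Set.Ioi (0 : ℝ), ENNReal.ofReal (r ^ 2) * g (r • (ω : Pt)))
        ∂((volume : Measure Pt).toSphere) := by
  have hd : Module.finrank ℝ Pt - 1 = 2 := by simp
  have h1 : ∫⁻ x, g x = ∫⁻ x : ({(0)}ᶜ : Set Pt), g x ∂((volume : Measure Pt).comap (↑)) := by
    rw [lintegral_subtype_comap (measurableSet_singleton _).compl, MeasureTheory.restrict_compl_singleton]
  have hm : Measurable (fun p : Metric.sphere (0 : Pt) 1 × Set.Ioi (0 : ℝ) =>
      g (p.2.1 • p.1.1)) := by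
    apply hg.comp
    fun_prop
  have h2 := (volume : Measure Pt).measurePreserving_homeomorphUnitSphereProd.lintegral_comp hm
  rw [hd, lintegral_prod _ hm.aemeasurable] at h2
  rw [h1]
  have h3 : ∀ x : ({(0)}ᶜ : Set Pt),
      ((homeomorphUnitSphereProd Pt x).2.1 • (homeomorphUnitSphereProd Pt x).1.1 : Pt) = x.1 := by
    intro x
    have hx : ‖x.1‖ ≠ 0 := norm_ne_zero_iff.2 x.2
    simp [smul_smul, hx]
  simp only [h3] at h2
  rw [h2]
  apply lintegral_congr
  intro ω
  have hm2 : Measurable (fun r : Set.Ioi (0 : ℝ) => g (r.1 • ω.1)) := by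
    apply hg.comp
    fun_prop
  rw [Measure.volumeIoiPow, lintegral_withDensity_eq_lintegral_mul _ (by fun_prop) hm2]
  exact lintegral_subtype_comap measurableSet_Ioi
    (fun r : ℝ => ENNReal.ofReal (r ^ 2) * g (r • (ω : Pt)))

lemma ac_of_loclip (w : ℝ → ℝ) (hw : LocallyLipschitz w) (a b : ℝ) :
    AbsolutelyContinuousOnInterval w a b := by
  obtain ⟨K, hK⟩ := (hw.locallyLipschitzOn (s := Set.uIcc a b)).exists_lipschitzOnWith_of_compact
    isCompact_uIcc
  exact hK.absolutelyContinuousOnInterval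

lemma w_const (w : ℝ → ℝ) (hw : LocallyLipschitz w) (h2 : ∀ q : ℝ, 0 < q → deriv w q = 0)
    (q : ℝ) (hq : 1 ≤ q) : w q = w 1 := by
  have := (ac_of_loclip w hw 1 q).integral_deriv_eq_sub
  rw [intervalIntegral.integral_congr (g := fun _ => (0 : ℝ))] at this
  · simp at this; linarith
  · intro x hx
    rw [Set.uIcc_of_le hq] at hx
    exact h2 x (by linarith [hx.1])

lemma ray_fin (w : ℝ → ℝ) (hw : LocallyLipschitz w) (hp : ∀ q, 0 ≤ w q)
    (h1 : ∀ q : ℝ, q ≤ 0 → deriv w q ≤ 0) (h2 : ∀ q : ℝ, 0 < q → deriv w q = 0)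
    (ψ : ℝ → ℂ) (hψ : ContDiff ℝ 1 ψ) (h0 : ψ 0 = 0) (t R : ℝ) (hR : 0 ≤ R) :
    ∫ r in (0 : ℝ)..R, ‖ψ r‖ ^ 2 * w (r - t) ≤
      2 * ((R - |t|) * ‖ψ R‖ ^ 2 * w (R - t)) +
      ∫ r in (0 : ℝ)..R, 4 * (r - |t|) ^ 2 * ‖deriv ψ r‖ ^ 2 * w (r - t) := by
  have hwc : Continuous w := hw.continuous
  have hψc : Continuous ψ := hψ.continuous
  have hψd : Continuous (deriv ψ) := hψ.continuous_deriv le_rfl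
  set f : ℝ → ℝ := fun r => (r - |t|) * ‖ψ r‖ ^ 2 with hf
  have hfC : ContDiff ℝ 1 f := by
    apply ContDiff.mul (by fun_prop)
    exact hψ.norm_sq ℝ
  have hfd : ∀ r, deriv f r = ‖ψ r‖ ^ 2 + (r - |t|) * (2 * inner ℝ (ψ r) (deriv ψ r)) := by
    intro r
    have hd : HasDerivAt ψ (deriv ψ r) r := (hψ.differentiable one_ne_zero r).hasDerivAt
    have := ((hasDerivAt_id r).sub_const |t|).mul hd.norm_sq
    refine (this.congr_deriv ?_).deriv
    simp
  have hg : LocallyLipschitz (fun r => w (r - t)) := by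
    have : LocallyLipschitz (fun r : ℝ => r - t) :=
      (LipschitzWith.of_dist_le_mul (K := 1) (by intro x y; simp)).locallyLipschitz
    exact hw.comp this
  have key := hfC.contDiffOn.absolutelyContinuousOnInterval.integral_mul_deriv_eq_deriv_mul
    (ac_of_loclip _ hg 0 R)
  have hpos : 0 ≤ ∫ r in (0 : ℝ)..R, f r * deriv (fun r => w (r - t)) r := by
    apply intervalIntegral.integral_nonneg_of_ae_restrict hR
    filter_upwards [ae_restrict_mem measurableSet_Icc] with r hr
    rw [deriv_comp_sub_const]
    rcases lt_or_ge 0 (r - t) with h | h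
    · rw [h2 _ h]; simp
    · have : 0 ≤ t := by linarith [hr.1]
      have hA : f r ≤ 0 := by
        simp only [hf, abs_of_nonneg this]
        exact mul_nonpos_of_nonpos_of_nonneg h (by positivity)
      exact mul_nonneg_of_nonpos_of_nonpos hA (h1 _ h)
  have hf0 : f 0 = 0 := by simp [hf, h0]
  have hint : ∫ r in (0 : ℝ)..R, deriv f r * w (r - t) ≤ f R * w (R - t) := by
    rw [hf0] at key; simp only [zero_mul, sub_zero] at key; linarith
  have hdc : Continuous (deriv f) := hfC.continuous_deriv le_rfl
  have hle : ∫ r in (0 : ℝ)..R, (‖ψ r‖ ^ 2 * w (r - t)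
      - 4 * (r - |t|) ^ 2 * ‖deriv ψ r‖ ^ 2 * w (r - t)) ≤
      ∫ r in (0 : ℝ)..R, 2 * (deriv f r * w (r - t)) := by
    apply intervalIntegral.integral_mono_on hR
    · exact Continuous.intervalIntegrable (by fun_prop) _ _
    · exact Continuous.intervalIntegrable (by fun_prop) _ _
    intro r _
    rw [hfd]
    have hin : |inner ℝ (ψ r) (deriv ψ r)| ≤ ‖ψ r‖ * ‖deriv ψ r‖ := abs_real_inner_le_norm _ _
    have hb : -(|(r - |t|)| * (‖ψ r‖ * ‖deriv ψ r‖)) ≤ (r - |t|) * inner ℝ (ψ r) (deriv ψ r) := by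
      apply neg_le_of_abs_le
      rw [abs_mul]
      gcongr
    have hs : |(r - |t|)| ^ 2 = (r - |t|) ^ 2 := sq_abs _
    rw [← sub_mul, ← mul_assoc]
    apply mul_le_mul_of_nonneg_right _ (hp _)
    nlinarith [sq_nonneg (‖ψ r‖ - 2 * |(r - |t|)| * ‖deriv ψ r‖)]
  rw [intervalIntegral.integral_sub, intervalIntegral.integral_const_mul] at hle
  · linarith
  · exact Continuous.intervalIntegrable (by fun_prop) _ _
  · exact Continuous.intervalIntegrable (by fun_prop) _ _

lemma ray_inf (w : ℝ → ℝ) (hw : LocallyLipschitz w) (hp : ∀ q, 0 ≤ w q)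
    (h1 : ∀ q : ℝ, q ≤ 0 → deriv w q ≤ 0) (h2 : ∀ q : ℝ, 0 < q → deriv w q = 0)
    (ψ : ℝ → ℂ) (hψ : ContDiff ℝ 1 ψ) (h0 : ψ 0 = 0) (t : ℝ)
    (hlim : Tendsto (fun R => (R - |t|) * ‖ψ R‖ ^ 2 * w (R - t)) atTop (𝓝 0)) :
    ∫⁻ r in Set.Ioi (0 : ℝ), ENNReal.ofReal (‖ψ r‖ ^ 2 * w (r - t)) ≤
      ∫⁻ r in Set.Ioi (0 : ℝ),
        ENNReal.ofReal (4 * (r - |t|) ^ 2 * ‖deriv ψ r‖ ^ 2 * w (r - t)) := by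
  have hwc : Continuous w := hw.continuous
  have hψc : Continuous ψ := hψ.continuous
  have hψd : Continuous (deriv ψ) := hψ.continuous_deriv le_rfl
  have conv : ∀ (g : ℝ → ℝ), Continuous g → (∀ r, 0 ≤ g r) → ∀ R : ℝ, 0 ≤ R →
      ∫⁻ r in Set.Ioc 0 R, ENNReal.ofReal (g r) = ENNReal.ofReal (∫ r in (0:ℝ)..R, g r) := by
    intro g hg hg0 R hR
    rw [intervalIntegral.integral_of_le hR, ofReal_integral_eq_lintegral_ofReal]
    · exact (hg.intervalIntegrable 0 R).1
    · exact ae_of_all _ hg0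
  set F : ℝ → ℝ := fun r => ‖ψ r‖ ^ 2 * w (r - t) with hF
  set H : ℝ → ℝ := fun r => 4 * (r - |t|) ^ 2 * ‖deriv ψ r‖ ^ 2 * w (r - t) with hH
  have hFc : Continuous F := by fun_prop
  have hHc : Continuous H := by fun_prop
  have hF0 : ∀ r, 0 ≤ F r := fun r => mul_nonneg (by positivity) (hp _)
  have hH0 : ∀ r, 0 ≤ H r := fun r => mul_nonneg (by positivity) (hp _)
  have hcov : AECover (volume.restrict (Set.Ioi (0 : ℝ))) atTop
      (fun R : ℝ => Set.Iic R) := aecover_Iic tendsto_id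
  have hT := hcov.lintegral_tendsto_of_countably_generated
    (f := fun r => ENNReal.ofReal (F r)) (by fun_prop)
  have hB : Tendsto (fun R => ENNReal.ofReal (2 * ((R - |t|) * ‖ψ R‖ ^ 2 * w (R - t))) +
      ∫⁻ r in Set.Ioi (0 : ℝ), ENNReal.ofReal (H r)) atTop
      (𝓝 (0 + ∫⁻ r in Set.Ioi (0 : ℝ), ENNReal.ofReal (H r))) := by
    apply Tendsto.add_const
    have := ENNReal.tendsto_ofReal (hlim.const_mul 2)
    simpa using this
  rw [zero_add] at hB
  refine le_of_tendsto_of_tendsto hT hB ?_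
  filter_upwards [eventually_ge_atTop 0] with R hR
  rw [Measure.restrict_restrict measurableSet_Iic, Set.Iic_inter_Ioi, conv F hFc hF0 R hR]
  calc _ ≤ ENNReal.ofReal (2 * ((R - |t|) * ‖ψ R‖ ^ 2 * w (R - t)) + ∫ r in (0 : ℝ)..R, H r) :=
        ENNReal.ofReal_le_ofReal (ray_fin w hw hp h1 h2 ψ hψ h0 t R hR)
    _ ≤ ENNReal.ofReal (2 * ((R - |t|) * ‖ψ R‖ ^ 2 * w (R - t))) +
        ENNReal.ofReal (∫ r in (0 : ℝ)..R, H r) := ENNReal.ofReal_add_le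
    _ ≤ _ := by
        gcongr
        rw [← conv H hHc hH0 R hR]
        exact lintegral_mono_set Set.Ioc_subset_Ioi_self

lemma slice_smooth (φ : ℝ → Pt → ℂ) (hφ : Smooth2 φ) (t : ℝ) : ContDiff ℝ 1 (φ t) := by
  have h : ContDiff ℝ 1 (Function.uncurry φ) := hφ.of_le (by exact_mod_cast le_top)
  exact h.comp (contDiff_prodMk_right t)

lemma dR_ray (φ : ℝ → Pt → ℂ) (hφ : Smooth2 φ) (t r : ℝ) (hr : 0 < r) (ω : Pt) (hω : ‖ω‖ = 1) :
    dR (rmul φ) t (r • ω) = deriv (fun s : ℝ => (s : ℂ) * φ t (s • ω)) r := by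
  have hx : r • ω ≠ 0 := by
    intro h
    have := congrArg norm h
    simp [norm_smul, hω] at this
    linarith
  have hd : DifferentiableAt ℝ (fun y => rmul φ t y) (r • ω) := by
    unfold rmul rad
    have h1 : DifferentiableAt ℝ (fun y : Pt => ‖y‖) (r • ω) := differentiableAt_id.norm ℝ hx
    have h2 : DifferentiableAt ℝ (φ t) (r • ω) :=
      (slice_smooth φ hφ t).differentiable one_ne_zero _
    exact (Complex.ofRealCLM.differentiableAt.comp _ h1).mul h2
  have hray : HasDerivAt (fun s : ℝ => s • ω) ω r := by
    simpa using (hasDerivAt_id r).smul_const ω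
  have hc := hd.hasFDerivAt.comp_hasDerivAt r hray
  have he : (fun s : ℝ => (s : ℂ) * φ t (s • ω)) =ᶠ[𝓝 r] (fun y => rmul φ t y) ∘ (fun s : ℝ => s • ω) := by
    filter_upwards [lt_mem_nhds hr] with s hs
    simp [rmul, rad, norm_smul, hω, abs_of_pos hs]
  rw [he.deriv_eq, hc.deriv]
  have hsum : ω = ∑ i, ω i • (EuclideanSpace.single i (1 : ℝ) : Pt) := by
    have := (EuclideanSpace.basisFun (Fin 3) ℝ).sum_repr ω
    simpa using this.symm
  have hL : ∀ M : Pt →L[ℝ] ℂ, M ω = ∑ i, ω i • M (EuclideanSpace.single i (1 : ℝ)) := by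
    intro M
    conv_lhs => rw [hsum]
    rw [map_sum]
    simp only [map_smul]
  rw [hL]
  simp only [dR, dX, rad, norm_smul, hω, Finset.mul_sum]
  apply Finset.sum_congr rfl
  intro i _
  have : (r : ℂ) ≠ 0 := by exact_mod_cast hr.ne'
  simp [abs_of_pos hr]
  field_simp

lemma bdry (w : ℝ → ℝ) (hw : LocallyLipschitz w) (hp : ∀ q, 0 ≤ w q)
    (h2 : ∀ q : ℝ, 0 < q → deriv w q = 0) (φ : ℝ → Pt → ℂ) (t : ℝ)
    (hl : Tendsto (fun x : Pt => rad x ^ ((3 : ℝ) / 2) * ‖φ t x‖) (Filter.cocompact Pt) (𝓝 0))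
    (ω : Pt) (hω : ‖ω‖ = 1) :
    Tendsto (fun R : ℝ => (R - |t|) * ‖(R : ℂ) * φ t (R • ω)‖ ^ 2 * w (R - t)) atTop (𝓝 0) := by
  have hto : Tendsto (fun R : ℝ => R • ω) atTop (Filter.cocompact Pt) := by
    apply tendsto_cocompact_of_tendsto_dist_comp_atTop (0 : Pt)
    simp only [dist_zero_right, norm_smul, hω, mul_one]
    exact tendsto_norm_atTop_atTop
  have h3 := ((hl.comp hto).pow 2).mul_const (w 1)
  simp only [ne_eq, OfNat.ofNat_ne_zero, not_false_eq_true, zero_pow, zero_mul] at h3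
  refine tendsto_of_tendsto_of_tendsto_of_le_of_le' tendsto_const_nhds h3 ?_ ?_
  · filter_upwards [eventually_ge_atTop |t|] with R hR
    exact mul_nonneg (mul_nonneg (by linarith) (by positivity)) (hp _)
  · filter_upwards [eventually_ge_atTop (1 + |t|)] with R hR
    have ht := le_abs_self t
    have ht0 := abs_nonneg t
    have hR0 : 0 < R := by linarith
    rw [w_const w hw h2 (R - t) (by linarith)]
    apply mul_le_mul_of_nonneg_right _ (hp _)
    have e : (R ^ ((3:ℝ)/2)) ^ 2 = R ^ 3 := by
      rw [← Real.rpow_natCast, ← Real.rpow_mul hR0.le, ← Real.rpow_natCast]; norm_num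
    simp only [Function.comp, rad, norm_smul, hω, mul_one, norm_mul, Complex.norm_real,
      Real.norm_eq_abs, abs_of_pos hR0, mul_pow, e]
    have : 0 ≤ R ^ 2 * ‖φ t (R • ω)‖ ^ 2 := by positivity
    nlinarith

/-- The radial part of the density. -/
def hRad (w : ℝ → ℝ) (φ : ℝ → Pt → ℂ) (t : ℝ) (x : Pt) : ℝ :=
  4 * (rad x - |t|) ^ 2 * (‖dR (rmul φ) t x‖ / rad x) ^ 2 * w (rad x - t)

lemma hRad_meas (w : ℝ → ℝ) (hw : Continuous w) (φ : ℝ → Pt → ℂ) (t : ℝ) :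
    Measurable (hRad w φ t) := by
  have hrad : Measurable rad := by unfold rad; fun_prop
  have hdX : ∀ i, Measurable (fun x => dX i (rmul φ) t x) := by
    intro i
    exact measurable_fderiv_apply_const ℝ _ _
  have hdR : Measurable (fun x => dR (rmul φ) t x) := by
    unfold dR
    fun_prop
  have hw' := hw.measurable
  unfold hRad
  fun_prop

lemma hRad_le (w : ℝ → ℝ) (hp : ∀ q, 0 ≤ w q) (φ : ℝ → Pt → ℂ) (t : ℝ) (x : Pt) :
    hRad w φ t x ≤ 2 * (hDens φ t x * w (rad x - t)) := by
  unfold hRad hDens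
  rw [← mul_assoc]
  apply mul_le_mul_of_nonneg_right _ (hp _)
  have hr : 0 ≤ rad x := norm_nonneg _
  have e1 : jb (t + rad x) ^ 2 = 1 + (t + rad x) ^ 2 := Real.sq_sqrt (by positivity)
  have e2 : jb (t - rad x) ^ 2 = 1 + (t - rad x) ^ 2 := Real.sq_sqrt (by positivity)
  have a1 : (rad x - |t|) ^ 2 ≤ jb (t + rad x) ^ 2 := by
    rw [e1]; nlinarith [neg_abs_le t, sq_abs t]
  have a2 : (rad x - |t|) ^ 2 ≤ jb (t - rad x) ^ 2 := by
    rw [e2]; nlinarith [le_abs_self t, sq_abs t]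
  have hn : ‖dR (rmul φ) t x‖ / rad x = ‖dR (rmul φ) t x / ((rad x : ℝ) : ℂ)‖ := by
    rw [norm_div, Complex.norm_real, Real.norm_of_nonneg hr]
  rw [hn]
  set A := dL (rmul φ) t x / ((rad x : ℝ) : ℂ) with hA
  set B := dLbar (rmul φ) t x / ((rad x : ℝ) : ℂ) with hB
  set D := dR (rmul φ) t x / ((rad x : ℝ) : ℂ) with hD
  have h : (2 : ℂ) * D = A - B := by
    simp only [hA, hB, hD, dL, dLbar]; ring
  have h' : 2 * ‖D‖ ≤ ‖A‖ + ‖B‖ := by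
    have := norm_sub_le A B
    rw [← h] at this
    simpa using this
  have h4 : 4 * ‖D‖ ^ 2 ≤ 2 * (‖A‖ ^ 2 + ‖B‖ ^ 2) := by
    nlinarith [norm_nonneg D, norm_nonneg A, norm_nonneg B, sq_nonneg (‖A‖ - ‖B‖)]
  have b1 := mul_le_mul_of_nonneg_right a1 (sq_nonneg ‖A‖)
  have b2 := mul_le_mul_of_nonneg_right a2 (sq_nonneg ‖B‖)
  have b3 := mul_le_mul_of_nonneg_left h4 (sq_nonneg (rad x - |t|))
  nlinarith

lemma lint_main (w : ℝ → ℝ) (φ : ℝ → Pt → ℂ)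
    (hw : LocallyLipschitz w) (hp : ∀ q : ℝ, 0 ≤ w q)
    (h1 : ∀ q : ℝ, q ≤ 0 → deriv w q ≤ 0) (h2 : ∀ q : ℝ, 0 < q → deriv w q = 0)
    (hφ : Smooth2 φ) (t : ℝ)
    (hl : Tendsto (fun x : Pt => rad x ^ ((3 : ℝ) / 2) * ‖φ t x‖) (Filter.cocompact Pt) (𝓝 0)) :
    ∫⁻ x : Pt, ENNReal.ofReal (‖φ t x‖ ^ 2 * w (rad x - t)) ≤
      ∫⁻ x : Pt, ENNReal.ofReal (hRad w φ t x) := by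
  have hwc := hw.continuous
  have hs := slice_smooth φ hφ t
  have hsc := hs.continuous
  have hrad : Continuous rad := by unfold rad; fun_prop
  rw [lintegral_polar _ (by fun_prop), lintegral_polar _ (hRad_meas w hwc φ t).ennreal_ofReal]
  apply lintegral_mono
  intro ω
  have hω : ‖(ω : Pt)‖ = 1 := by simp
  set ψ : ℝ → ℂ := fun s : ℝ => (s : ℂ) * φ t (s • (ω : Pt)) with hψ
  have hψC : ContDiff ℝ 1 ψ := by
    apply ContDiff.mul
    · exact Complex.ofRealCLM.contDiff
    · exact hs.comp (by fun_prop)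
  have key := ray_inf w hw hp h1 h2 ψ hψC (by simp [hψ]) t (bdry w hw hp h2 φ t hl ω hω)
  refine le_trans (le_of_eq ?_) (le_trans key (le_of_eq ?_))
  · apply setLIntegral_congr_fun measurableSet_Ioi
    intro r hr
    have hr : 0 < r := hr
    simp only
    rw [← ENNReal.ofReal_mul (by positivity)]
    simp only [hψ, rad, norm_smul, hω, norm_mul, Complex.norm_real, Real.norm_of_nonneg hr.le]
    congr 1; ring_nf
  · apply setLIntegral_congr_fun measurableSet_Ioi
    intro r hr
    have hr : 0 < r := hr
    simp only
    rw [← ENNReal.ofReal_mul (by positivity)]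
    unfold hRad
    rw [dR_ray φ hφ t r hr ω hω]
    simp only [rad, norm_smul, hω, Real.norm_of_nonneg hr.le, mul_one]
    congr 1; field_simp; simp only [hψ]; ring

/-- Lemma 2.5: weighted Hardy-type estimate
`∫ |φ|² w ≤ C ∫ (⟨t+r⟩²|L(rφ)/r|² + ⟨t−r⟩²|L̲(rφ)/r|²) w`. -/
theorem stmt4 :
    ∃ C : ℝ, 0 < C ∧
      ∀ (w : ℝ → ℝ) (φ : ℝ → Pt → ℂ),
        LocallyLipschitz w → (∀ q : ℝ, 0 ≤ w q) →
        (∀ q : ℝ, q ≤ 0 → deriv w q ≤ 0) → (∀ q : ℝ, 0 < q → deriv w q = 0) →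
        Smooth2 φ →
        (∀ t : ℝ, Tendsto (fun x : Pt => rad x ^ ((3 : ℝ) / 2) * ‖φ t x‖)
          (Filter.cocompact Pt) (𝓝 0)) →
        ∀ t : ℝ,
          Integrable (fun x : Pt => hDens φ t x * w (rad x - t)) →
          (∫ x : Pt, ‖φ t x‖ ^ 2 * w (rad x - t))
            ≤ C * ∫ x : Pt, hDens φ t x * w (rad x - t) := by
  refine ⟨2, by norm_num, ?_⟩
  intro w φ hw hp h1 h2 hφ hl t hint
  have hwc := hw.continuous
  have hsc := (slice_smooth φ hφ t).continuous
  have hrad : Continuous rad := by unfold rad; fun_prop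
  have hmain := lint_main w φ hw hp h1 h2 hφ t (hl t)
  have hD0 : ∀ x, 0 ≤ hDens φ t x * w (rad x - t) := by
    intro x
    apply mul_nonneg _ (hp _)
    unfold hDens
    positivity
  have hle : ∫⁻ x : Pt, ENNReal.ofReal (‖φ t x‖ ^ 2 * w (rad x - t)) ≤
      ENNReal.ofReal (∫ x : Pt, 2 * (hDens φ t x * w (rad x - t))) := by
    rw [ofReal_integral_eq_lintegral_ofReal (hint.const_mul 2)
      (ae_of_all _ fun x => mul_nonneg (by norm_num) (hD0 x))]
    refine hmain.trans (lintegral_mono fun x => ENNReal.ofReal_le_ofReal (hRad_le w hp φ t x))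
  rw [← integral_const_mul, integral_eq_lintegral_of_nonneg_ae]
  · apply ENNReal.toReal_le_of_le_ofReal _ hle
    exact integral_nonneg fun x => mul_nonneg (by norm_num) (hD0 x)
  · exact ae_of_all _ fun x => mul_nonneg (by positivity) (hp _)
  · exact Continuous.aestronglyMeasurable (by fun_prop)
end
end

section
/- Let w:ℝ→[0,∞) be locally Lipschitz with w′(q)≤0 for q≤0 and w′(q)=0 for q>0, and let φ be a smooth function with lim_{|x|→∞}|x|^{3/2}φ(t,x)=0. Then there is a universal constant C such that for each t: ∫_{ℝ³} (⟨t−r⟩²/r²)|φ(t,x)|² w(q) dx ≤ C ∫_{ℝ³}( ⟨t+r⟩²|L(rφ)/r|² + ⟨t−r⟩²|L̲(rφ)/r|² ) w(q) dx. -/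
noncomputable section

open Real MeasureTheory Filter
open scoped RealInnerProductSpace Topology

lemma aux_pointwise (v p : ℂ) (r T : ℝ) :
    (r ^ 2 + T ^ 2 + 1) * ‖v‖ ^ 2 ≤
      2 * ((3 * r ^ 2 - (T ^ 2 + 1)) * ‖v‖ ^ 2 + (r ^ 3 - (T ^ 2 + 1) * r) * (2 * (inner ℝ (v) (p))))
        + 16 * ((1 + (r - T) ^ 2) * ‖v + (r : ℂ) * p‖ ^ 2) := by
  set z : ℂ := v + (r : ℂ) * p with hz
  have hQ : (inner ℝ (v) (z)) = ‖v‖ ^ 2 + r * (inner ℝ (v) (p)) := by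
    have : z = v + r • p := by simp [hz]
    rw [this, inner_add_right, real_inner_smul_right, real_inner_self_eq_norm_sq]
  have hCS : (inner ℝ (v) (z)) ^ 2 ≤ ‖v‖ ^ 2 * ‖z‖ ^ 2 := by
    rw [← mul_pow, ← sq_abs]
    exact pow_le_pow_left₀ (abs_nonneg _) (abs_real_inner_le_norm v z) 2
  have hb : (r ^ 2 - T ^ 2 - 1) ^ 2 ≤ 4 * ((r ^ 2 + T ^ 2 + 1) * (1 + (r - T) ^ 2)) := by
    nlinarith [sq_nonneg ((r - T) * (r - T)), sq_nonneg (r ^ 2 - T ^ 2 + 1), sq_nonneg r,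
      sq_nonneg T, sq_nonneg (r - T)]
  set N := ‖v‖ ^ 2
  set P := ‖z‖ ^ 2
  set I := (inner ℝ (v) (p))
  set Q := (inner ℝ (v) (z))
  have hN : 0 ≤ N := by positivity
  have hP : 0 ≤ P := by positivity
  have key : (4 * (r ^ 2 - T ^ 2 - 1) * Q) ^ 2
      ≤ ((r ^ 2 + T ^ 2 + 1) * N + 16 * ((1 + (r - T) ^ 2) * P)) ^ 2 := by
    calc (4 * (r ^ 2 - T ^ 2 - 1) * Q) ^ 2 = 16 * ((r ^ 2 - T ^ 2 - 1) ^ 2 * Q ^ 2) := by ring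
      _ ≤ 16 * ((4 * ((r ^ 2 + T ^ 2 + 1) * (1 + (r - T) ^ 2))) * (N * P)) := by gcongr
      _ ≤ _ := by
        nlinarith [sq_nonneg ((r ^ 2 + T ^ 2 + 1) * N - 16 * ((1 + (r - T) ^ 2) * P))]
  have h2 := (abs_le_of_sq_le_sq' key (by positivity)).1
  have h3 : (3 * r ^ 2 - (T ^ 2 + 1)) * N + (r ^ 3 - (T ^ 2 + 1) * r) * (2 * I)
      = (r ^ 2 + T ^ 2 + 1) * N + 2 * (r ^ 2 - T ^ 2 - 1) * Q := by rw [hQ]; ring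
  rw [h3]
  linarith

lemma aux_ac (f : ℝ → ℝ) (hf : LocallyLipschitz f) (a b : ℝ) :
    AbsolutelyContinuousOnInterval f a b := by
  obtain ⟨K, hK⟩ := (hf.locallyLipschitzOn (s := Set.uIcc a b)).exists_lipschitzOnWith_of_compact
    isCompact_uIcc
  exact hK.absolutelyContinuousOnInterval

lemma aux_oneD (W : ℝ → ℝ) (hW : LocallyLipschitz W) (hW0 : ∀ r, 0 ≤ W r) (T : ℝ)
    (h1 : ∀ r, deriv W r ≤ 0) (h2 : ∀ r, T < r → deriv W r = 0) (v v' : ℝ → ℂ)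
    (hv : ∀ r, HasDerivAt v (v' r) r) (hv' : Continuous v') (R : ℝ) (hR : 0 < R) :
    ∫ r in (0 : ℝ)..R, (r ^ 2 + T ^ 2 + 1) * ‖v r‖ ^ 2 * W r ≤
      2 * ((R ^ 3 - (T ^ 2 + 1) * R) * ‖v R‖ ^ 2 * W R)
      + 16 * ∫ r in (0 : ℝ)..R, (1 + (r - T) ^ 2) * ‖v r + (r : ℂ) * v' r‖ ^ 2 * W r := by
  have hvc : Continuous v := continuous_iff_continuousAt.2 fun r => (hv r).continuousAt
  have hWc := hW.continuous
  set F : ℝ → ℝ := fun r => (r ^ 3 - (T ^ 2 + 1) * r) * ‖v r‖ ^ 2 with hF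
  set F' : ℝ → ℝ := fun r => (3 * r ^ 2 - (T ^ 2 + 1)) * ‖v r‖ ^ 2
    + (r ^ 3 - (T ^ 2 + 1) * r) * (2 * (inner ℝ (v r) (v' r))) with hF'
  have hFd : ∀ r, HasDerivAt F (F' r) r := by
    intro r
    have e1 : HasDerivAt (fun r : ℝ => r ^ 3 - (T ^ 2 + 1) * r) (3 * r ^ 2 - (T ^ 2 + 1)) r := by
      have := (hasDerivAt_pow 3 r).sub ((hasDerivAt_id r).const_mul (T ^ 2 + 1))
      exact this.congr_deriv (by norm_num)
    exact e1.mul (hv r).norm_sq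
  have hF'c : Continuous F' := by fun_prop
  have hFderiv : deriv F = F' := funext fun r => (hFd r).deriv
  have hFC1 : ContDiff ℝ 1 F := by
    rw [contDiff_one_iff_deriv]
    exact ⟨fun r => (hFd r).differentiableAt, hFderiv ▸ hF'c⟩
  have ibp := (aux_ac F hFC1.locallyLipschitz 0 R).integral_mul_deriv_eq_deriv_mul
    (aux_ac W hW 0 R)
  have hnn : 0 ≤ ∫ r in (0 : ℝ)..R, F r * deriv W r := by
    apply intervalIntegral.integral_nonneg hR.le
    intro r hr
    rcases le_or_gt r T with h | h
    · have : F r ≤ 0 := by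
        apply mul_nonpos_of_nonpos_of_nonneg _ (by positivity)
        have := hr.1
        have : r ^ 2 ≤ T ^ 2 := by gcongr
        nlinarith [mul_nonneg hr.1 (sub_nonneg.2 this)]
      exact mul_nonneg_of_nonpos_of_nonpos this (h1 r)
    · simp [h2 r h]
  rw [ibp, hFderiv] at hnn
  have hF0 : F 0 = 0 := by simp [hF]
  have hbd : ∫ r in (0 : ℝ)..R, F' r * W r ≤ F R * W R := by
    rw [hF0] at hnn; linarith
  have hmono : ∫ r in (0 : ℝ)..R, (r ^ 2 + T ^ 2 + 1) * ‖v r‖ ^ 2 * W r ≤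
      ∫ r in (0 : ℝ)..R, (2 * (F' r * W r)
        + 16 * ((1 + (r - T) ^ 2) * ‖v r + (r : ℂ) * v' r‖ ^ 2 * W r)) := by
    apply intervalIntegral.integral_mono_on hR.le
    · exact (by fun_prop : Continuous _).intervalIntegrable _ _
    · exact (by fun_prop : Continuous _).intervalIntegrable _ _
    · intro r _
      have := mul_le_mul_of_nonneg_right (aux_pointwise (v r) (v' r) r T) (hW0 r)
      simp only [hF']
      linarith
  rw [intervalIntegral.integral_add ((by fun_prop : Continuous _).intervalIntegrable _ _)
    ((by fun_prop : Continuous _).intervalIntegrable _ _), intervalIntegral.integral_const_mul,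
    intervalIntegral.integral_const_mul] at hmono
  linarith

lemma aux_polar (f : Pt → ENNReal) (hf : AEMeasurable f) :
    ∫⁻ x, f x = ∫⁻ ω, (∫⁻ r in Set.Ioi (0 : ℝ), ENNReal.ofReal (r ^ 2) * f (r • (ω : Pt)))
      ∂((volume : Measure Pt).toSphere) := by
  have hmp := (volume : Measure Pt).measurePreserving_homeomorphUnitSphereProd
  have hd : Module.finrank ℝ Pt - 1 = 2 := by simp
  rw [hd] at hmp
  have hemb := (homeomorphUnitSphereProd Pt).measurableEmbedding
  have hms : MeasurableSet ({0}ᶜ : Set Pt) := (measurableSet_singleton _).compl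
  have e0 : ∀ y : ({0}ᶜ : Set Pt), ((homeomorphUnitSphereProd Pt y).2 : ℝ) •
      ((homeomorphUnitSphereProd Pt y).1 : Pt) = y := by
    intro y
    have := congrArg Subtype.val ((homeomorphUnitSphereProd Pt).symm_apply_apply y)
    rw [homeomorphUnitSphereProd_symm_apply_coe] at this
    exact this
  set G : (Metric.sphere (0 : Pt) 1) × Set.Ioi (0 : ℝ) → ENNReal :=
    fun p => f ((p.2 : ℝ) • (p.1 : Pt)) with hG
  have e1 : ∫⁻ x, f x = ∫⁻ y : ({0}ᶜ : Set Pt), f y ∂((volume : Measure Pt).comap Subtype.val) := by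
    rw [lintegral_subtype_comap hms, restrict_compl_singleton]
  have e2 : (fun y : ({0}ᶜ : Set Pt) => f y) = fun y => G (homeomorphUnitSphereProd Pt y) := by
    funext y
    simp only [hG, e0]
  have hGm : AEMeasurable G ((volume : Measure Pt).toSphere.prod (.volumeIoiPow 2)) := by
    rw [← hmp.map_eq, hemb.aemeasurable_map_iff]
    change AEMeasurable (fun y => G (homeomorphUnitSphereProd Pt y)) _
    rw [← e2]
    have := (hf.restrict (s := ({0}ᶜ : Set Pt)))
    rw [← map_comap_subtype_coe hms, (MeasurableEmbedding.subtype_coe hms).aemeasurable_map_iff]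
      at this
    exact this
  rw [e1, e2, hmp.lintegral_comp_emb hemb, lintegral_prod _ hGm]
  congr 1
  funext ω
  rw [Measure.volumeIoiPow, lintegral_withDensity_eq_lintegral_mul_non_measurable₀]
  · exact lintegral_subtype_comap measurableSet_Ioi
      (fun r : ℝ => ENNReal.ofReal (r ^ 2) * f (r • (ω : Pt)))
  · fun_prop
  · simp

lemma aux_dR (φ : ℝ → Pt → ℂ) (t : ℝ) (hφ : Differentiable ℝ (φ t)) (ω : Pt) (hω : ‖ω‖ = 1)
    (r : ℝ) (hr : 0 < r) :
    dR (rmul φ) t (r • ω) = φ t (r • ω) + (r : ℂ) * fderiv ℝ (φ t) (r • ω) ω := by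
  have hn : ∀ s : ℝ, 0 < s → ‖s • ω‖ = s := fun s hs => by
    rw [norm_smul, hω, mul_one, Real.norm_of_nonneg hs.le]
  have hne : r • ω ≠ 0 := by
    intro h
    have := hn r hr
    rw [h, norm_zero] at this
    exact hr.ne this
  have hdiff : DifferentiableAt ℝ (fun y => rmul φ t y) (r • ω) := by
    have h1 : DifferentiableAt ℝ (fun y : Pt => ‖y‖) (r • ω) :=
      (contDiffAt_norm ℝ hne (n := 1)).differentiableAt (by norm_num)
    have h2 : DifferentiableAt ℝ (fun y : Pt => ((‖y‖ : ℝ) : ℂ)) (r • ω) :=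
      Complex.ofRealCLM.differentiableAt.comp (r • ω) h1
    exact h2.mul (hφ _)
  have hline : HasDerivAt (fun s : ℝ => s • ω) ω r := by
    simpa using (hasDerivAt_id r).smul_const ω
  have hA : HasDerivAt (fun s : ℝ => rmul φ t (s • ω))
      (fderiv ℝ (fun y => rmul φ t y) (r • ω) ω) r :=
    HasFDerivAt.comp_hasDerivAt (l := fun y => rmul φ t y) r hdiff.hasFDerivAt hline
  have hB : HasDerivAt (fun s : ℝ => rmul φ t (s • ω))
      (φ t (r • ω) + (r : ℂ) * fderiv ℝ (φ t) (r • ω) ω) r := by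
    have h1 : HasDerivAt (fun s : ℝ => φ t (s • ω)) (fderiv ℝ (φ t) (r • ω) ω) r :=
      (hφ _).hasFDerivAt.comp_hasDerivAt r hline
    have h2 : HasDerivAt (fun s : ℝ => (s : ℂ)) 1 r := Complex.ofRealCLM.hasDerivAt
    have h3 := h2.mul h1
    rw [one_mul] at h3
    refine h3.congr_of_eventuallyEq ?_
    filter_upwards [lt_mem_nhds hr] with s hs
    simp only [rmul, rad, hn s hs, Pi.mul_apply]
  have hAB := hA.unique hB
  rw [← hAB]
  unfold dR dX
  have hsum : ω = ∑ i, (ω i) • (EuclideanSpace.single i (1 : ℝ) : Pt) := by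
    ext j
    simp [Fin.sum_univ_three]
    fin_cases j <;> simp
  conv_rhs => rw [hsum]
  rw [map_sum, rad, hn r hr, Finset.mul_sum]
  rw [← hsum]
  refine Finset.sum_congr rfl fun i _ => ?_
  rw [map_smul, Complex.real_smul]
  have : (r : ℂ) ≠ 0 := by exact_mod_cast hr.ne'
  simp only [PiLp.smul_apply, smul_eq_mul, Complex.ofReal_mul]
  field_simp

lemma aux_dens (φ : ℝ → Pt → ℂ) (t : ℝ) (hφ : Differentiable ℝ (φ t)) (ω : Pt) (hω : ‖ω‖ = 1)
    (r : ℝ) (hr : 0 < r) :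
    (1 + (r - |t|) ^ 2) * ‖φ t (r • ω) + (r : ℂ) * fderiv ℝ (φ t) (r • ω) ω‖ ^ 2
      ≤ (1 / 2) * (r ^ 2 * hDens φ t (r • ω)) := by
  have hn : rad (r • ω) = r := by
    rw [rad, norm_smul, hω, mul_one, Real.norm_of_nonneg hr.le]
  rw [← aux_dR φ t hφ ω hω r hr, hDens, hn]
  set A := dL (rmul φ) t (r • ω) with hA
  set B := dLbar (rmul φ) t (r • ω) with hB
  have hAB : dR (rmul φ) t (r • ω) = (A - B) / 2 := by
    simp only [hA, hB, dL, dLbar]; ring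
  have hj : ∀ a, jb a ^ 2 = 1 + a ^ 2 := fun a => Real.sq_sqrt (by positivity)
  rw [hAB, hj, hj, norm_div, norm_div, norm_div, Complex.norm_real, Real.norm_of_nonneg hr.le]
  have h1 : ‖A - B‖ ≤ ‖A‖ + ‖B‖ := norm_sub_le _ _
  have h2 : ‖A - B‖ ^ 2 ≤ 2 * (‖A‖ ^ 2 + ‖B‖ ^ 2) := by
    nlinarith [norm_nonneg (A - B), sq_nonneg (‖A‖ - ‖B‖), norm_nonneg A, norm_nonneg B]
  have ht : (r - |t|) ^ 2 ≤ (t + r) ^ 2 ∧ (r - |t|) ^ 2 ≤ (t - r) ^ 2 := by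
    constructor <;> nlinarith [sq_abs t, le_abs_self t, neg_abs_le t]
  have e : (1 / 2) * (r ^ 2 * ((1 + (t + r) ^ 2) * (‖A‖ / r) ^ 2 + (1 + (t - r) ^ 2) * (‖B‖ / r) ^ 2))
      = (1 / 2) * ((1 + (t + r) ^ 2) * ‖A‖ ^ 2 + (1 + (t - r) ^ 2) * ‖B‖ ^ 2) := by
    field_simp
  rw [e]
  have n2 : ‖(2 : ℂ)‖ = 2 := by simp
  rw [n2, div_pow]
  calc (1 + (r - |t|) ^ 2) * (‖A - B‖ ^ 2 / 2 ^ 2)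
      ≤ (1 + (r - |t|) ^ 2) * ((2 * (‖A‖ ^ 2 + ‖B‖ ^ 2)) / 2 ^ 2) := by gcongr
    _ = (1 / 2) * ((1 + (r - |t|) ^ 2) * ‖A‖ ^ 2 + (1 + (r - |t|) ^ 2) * ‖B‖ ^ 2) := by ring
    _ ≤ _ := by
      have i1 := mul_le_mul_of_nonneg_right ht.1 (sq_nonneg ‖A‖)
      have i2 := mul_le_mul_of_nonneg_right ht.2 (sq_nonneg ‖B‖)
      linarith

lemma aux_hDens_nonneg (φ : ℝ → Pt → ℂ) (t : ℝ) (x : Pt) : 0 ≤ hDens φ t x := by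
  unfold hDens; positivity

lemma aux_ray (w : ℝ → ℝ) (φ : ℝ → Pt → ℂ) (hw : LocallyLipschitz w) (hw0 : ∀ q : ℝ, 0 ≤ w q)
    (h1 : ∀ q : ℝ, q ≤ 0 → deriv w q ≤ 0) (h2 : ∀ q : ℝ, 0 < q → deriv w q = 0) (t : ℝ)
    (hφ : ContDiff ℝ 1 (φ t))
    (hdec : Tendsto (fun x : Pt => rad x ^ ((3 : ℝ) / 2) * ‖φ t x‖) (Filter.cocompact Pt) (𝓝 0))
    (ω : Pt) (hω : ‖ω‖ = 1) :
    ∫⁻ r in Set.Ioi (0 : ℝ), ENNReal.ofReal (r ^ 2) * ENNReal.ofReal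
        ((jb (t - rad (r • ω)) ^ 2 / rad (r • ω) ^ 2) * ‖φ t (r • ω)‖ ^ 2 * w (rad (r • ω) - t))
      ≤ ∫⁻ r in Set.Ioi (0 : ℝ), ENNReal.ofReal (r ^ 2) *
        (16 * ENNReal.ofReal (hDens φ t (r • ω) * w (rad (r • ω) - t))) := by
  have hn : ∀ s : ℝ, 0 < s → rad (s • ω) = s := fun s hs => by
    rw [rad, norm_smul, hω, mul_one, Real.norm_of_nonneg hs.le]
  have hj : ∀ a, jb a ^ 2 = 1 + a ^ 2 := fun a => Real.sq_sqrt (by positivity)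
  have hd : Differentiable ℝ (φ t) := hφ.differentiable (by norm_num)
  set T := |t| with hT
  set W : ℝ → ℝ := fun r => w (r - t) with hW
  have hWL : LocallyLipschitz W :=
    hw.comp (LipschitzWith.of_le_add (f := fun r : ℝ => r - t) (fun x y => by
      have := le_abs_self (x - y)
      simp only [Real.dist_eq]
      linarith)).locallyLipschitz
  have hWc := hWL.continuous
  have hWd : ∀ r, deriv W r = deriv w (r - t) := fun r => deriv_comp_sub_const w t r
  have hW1 : ∀ r, deriv W r ≤ 0 := fun r => by
    rw [hWd]
    rcases le_or_gt (r - t) 0 with h | h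
    · exact h1 _ h
    · exact (h2 _ h).le
  have hW2 : ∀ r, T < r → deriv W r = 0 := fun r hr => by
    rw [hWd]; exact h2 _ (by linarith [le_abs_self t])
  set v : ℝ → ℂ := fun r => φ t (r • ω) with hv
  set v' : ℝ → ℂ := fun r => fderiv ℝ (φ t) (r • ω) ω with hv'
  have hvd : ∀ r, HasDerivAt v (v' r) r := fun r => by
    have hline : HasDerivAt (fun s : ℝ => s • ω) ω r := by
      simpa using (hasDerivAt_id r).smul_const ω
    exact (hd _).hasFDerivAt.comp_hasDerivAt r hline
  have hvc : Continuous v := continuous_iff_continuousAt.2 fun r => (hvd r).continuousAt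
  have hv'c : Continuous v' := by
    have := hφ.continuous_fderiv (by norm_num)
    fun_prop
  set f : ℝ → ℝ := fun r => (r ^ 2 + T ^ 2 + 1) * ‖v r‖ ^ 2 * W r with hf
  set g : ℝ → ℝ := fun r => (1 + (r - T) ^ 2) * ‖v r + (r : ℂ) * v' r‖ ^ 2 * W r with hg
  have hfc : Continuous f := by fun_prop
  have hgc : Continuous g := by fun_prop
  have hf0 : ∀ r, 0 ≤ f r := fun r => mul_nonneg (by positivity) (hw0 _)
  have hg0 : ∀ r, 0 ≤ g r := fun r => mul_nonneg (by positivity) (hw0 _)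
  set bd : ℝ → ℝ := fun R => 2 * ((R ^ 3 - (T ^ 2 + 1) * R) * ‖v R‖ ^ 2 * W R) with hbd
  have hfin : ∀ R, 0 < R → ∫⁻ r in Set.Ioc 0 R, ENNReal.ofReal (f r) ≤
      ENNReal.ofReal (bd R) + 16 * ∫⁻ r in Set.Ioi 0, ENNReal.ofReal (g r) := by
    intro R hR
    have key := aux_oneD W hWL (fun r => hw0 _) T hW1 hW2 v v' hvd hv'c R hR
    rw [intervalIntegral.integral_of_le hR.le, intervalIntegral.integral_of_le hR.le] at key
    have i1 : Integrable f (volume.restrict (Set.Ioc 0 R)) := hfc.integrableOn_Ioc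
    have i2 : Integrable g (volume.restrict (Set.Ioc 0 R)) := hgc.integrableOn_Ioc
    rw [← ofReal_integral_eq_lintegral_ofReal i1 (ae_of_all _ hf0)]
    calc ENNReal.ofReal (∫ r in Set.Ioc 0 R, f r)
        ≤ ENNReal.ofReal (bd R + 16 * ∫ r in Set.Ioc 0 R, g r) := ENNReal.ofReal_le_ofReal key
      _ ≤ ENNReal.ofReal (bd R) + ENNReal.ofReal (16 * ∫ r in Set.Ioc 0 R, g r) :=
          ENNReal.ofReal_add_le
      _ = ENNReal.ofReal (bd R) + 16 * ∫⁻ r in Set.Ioc 0 R, ENNReal.ofReal (g r) := by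
          rw [ENNReal.ofReal_mul (p := 16) (by norm_num),
            ofReal_integral_eq_lintegral_ofReal i2 (ae_of_all _ hg0)]
          simp
      _ ≤ _ := by
          gcongr
          exact Set.Ioc_subset_Ioi_self
  -- the weight is bounded on the ray
  have hWb : ∀ R, T < R → W R = W (T + 1) := by
    have hconst : ∀ a b, T < a → a ≤ b → W b = W a := by
      intro a b ha hab
      have := (aux_ac W hWL a b).integral_deriv_eq_sub
      have h0 : ∫ x in a..b, deriv W x = 0 := by
        rw [intervalIntegral.integral_congr (g := fun _ => (0 : ℝ))]
        · simp
        · intro x hx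
          rw [Set.uIcc_of_le hab] at hx
          exact hW2 x (lt_of_lt_of_le ha hx.1)
      linarith
    intro R hR
    rcases le_total R (T + 1) with h | h
    · exact (hconst R (T + 1) hR h).symm
    · exact hconst (T + 1) R (by linarith) h
  have hlim0 : Tendsto (fun R : ℝ => R ^ 3 * ‖v R‖ ^ 2) atTop (𝓝 0) := by
    have hray : Tendsto (fun R : ℝ => R • ω) atTop (Filter.cocompact Pt) := by
      rw [← Metric.cobounded_eq_cocompact, ← tendsto_norm_atTop_iff_cobounded]
      refine tendsto_atTop_mono (fun R => ?_) tendsto_id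
      rw [norm_smul, hω, mul_one]
      exact le_abs_self R
    have := (hdec.comp hray).pow 2
    rw [zero_pow (by norm_num)] at this
    refine this.congr' ?_
    filter_upwards [eventually_gt_atTop 0] with R hR
    simp only [Function.comp_apply, hn R hR, mul_pow, hv]
    congr 1
    rw [← Real.rpow_natCast, ← Real.rpow_mul hR.le, ← Real.rpow_natCast]
    norm_num
  have hbdlim : Tendsto (fun R => ENNReal.ofReal (bd R)) atTop (𝓝 0) := by
    have h3 : Tendsto (fun R : ℝ => ENNReal.ofReal (2 * (R ^ 3 * ‖v R‖ ^ 2 * W (T + 1))))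
        atTop (𝓝 0) := by
      have := ENNReal.tendsto_ofReal ((hlim0.mul_const (W (T + 1))).const_mul 2)
      simpa using this
    refine tendsto_of_tendsto_of_tendsto_of_le_of_le' tendsto_const_nhds h3
      (Eventually.of_forall fun _ => bot_le) ?_
    filter_upwards [eventually_gt_atTop T] with R hR
    have hR0 : 0 < R := lt_of_le_of_lt (abs_nonneg t) hR
    apply ENNReal.ofReal_le_ofReal
    simp only [hbd]
    rw [hWb R hR]
    have := hw0 (T + 1 - t)
    have hW' : 0 ≤ W (T + 1) := this
    gcongr
    have : 0 ≤ (T ^ 2 + 1) * R := by positivity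
    linarith
  have hfull : ∫⁻ r in Set.Ioi 0, ENNReal.ofReal (f r) ≤
      16 * ∫⁻ r in Set.Ioi 0, ENNReal.ofReal (g r) := by
    have hl : Tendsto (fun R : ℝ => ∫⁻ r in Set.Ioc 0 R, ENNReal.ofReal (f r)) atTop
        (𝓝 (∫⁻ r in Set.Ioi 0, ENNReal.ofReal (f r))) := by
      have hcov : AECover (volume.restrict (Set.Ioi (0:ℝ))) atTop (fun R : ℝ => Set.Iic R) :=
        aecover_Iic tendsto_id
      have := hcov.lintegral_tendsto_of_countably_generated
        (f := fun r => ENNReal.ofReal (f r)) (by fun_prop)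
      refine this.congr fun R => ?_
      rw [Measure.restrict_restrict measurableSet_Iic, Set.inter_comm, Set.Ioi_inter_Iic]
    have hr := hbdlim.add_const (16 * ∫⁻ r in Set.Ioi 0, ENNReal.ofReal (g r))
    rw [zero_add] at hr
    refine le_of_tendsto_of_tendsto hl hr ?_
    filter_upwards [eventually_gt_atTop 0] with R hR using hfin R hR
  calc _ ≤ ∫⁻ r in Set.Ioi 0, 2 * ENNReal.ofReal (f r) := by
        refine setLIntegral_mono' measurableSet_Ioi fun r hr => ?_
        have hr : 0 < r := hr
        rw [hn r hr, hj, ← ENNReal.ofReal_mul (by positivity)]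
        have h2' : 2 * ENNReal.ofReal (f r) = ENNReal.ofReal (2 * f r) := by
          rw [ENNReal.ofReal_mul (p := 2) (by norm_num)]; simp
        rw [h2']
        apply ENNReal.ofReal_le_ofReal
        have e : r ^ 2 * ((1 + (t - r) ^ 2) / r ^ 2 * ‖φ t (r • ω)‖ ^ 2 * w (r - t))
            = (1 + (t - r) ^ 2) * ‖v r‖ ^ 2 * W r := by
          simp only [hv, hW]; field_simp
        rw [e]
        have e2 : 2 * f r = (2 * (r ^ 2 + T ^ 2 + 1)) * ‖v r‖ ^ 2 * W r := by
          simp only [hf]; ring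
        rw [e2]
        have := hw0 (r - t)
        have hW' : 0 ≤ W r := this
        gcongr
        rw [hT, sq_abs]
        nlinarith [sq_nonneg (t + r)]
    _ = 2 * ∫⁻ r in Set.Ioi 0, ENNReal.ofReal (f r) := by
        rw [lintegral_const_mul _ (by fun_prop)]
    _ ≤ 2 * (16 * ∫⁻ r in Set.Ioi 0, ENNReal.ofReal (g r)) := by gcongr
    _ = ∫⁻ r in Set.Ioi 0, 32 * ENNReal.ofReal (g r) := by
        rw [lintegral_const_mul _ (by fun_prop), ← mul_assoc]
        norm_num
    _ ≤ _ := by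
        refine setLIntegral_mono' measurableSet_Ioi fun r hr => ?_
        have hr : 0 < r := hr
        rw [hn r hr]
        have h16 : (16 : ENNReal) = ENNReal.ofReal 16 := by simp
        have h32 : (32 : ENNReal) = ENNReal.ofReal 32 := by simp
        rw [h16, h32, ← ENNReal.ofReal_mul (by norm_num), ← ENNReal.ofReal_mul (by norm_num),
          ← ENNReal.ofReal_mul (by positivity)]
        apply ENNReal.ofReal_le_ofReal
        have := mul_le_mul_of_nonneg_right (aux_dens φ t hd ω hω r hr) (hw0 (r - t))
        simp only [hg, hv, hv', hW, hT]
        linarith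

/-- Lemma 2.6: weighted Hardy-type estimate
`∫ (⟨t−r⟩²/r²)|φ|² w ≤ C ∫ (⟨t+r⟩²|L(rφ)/r|² + ⟨t−r⟩²|L̲(rφ)/r|²) w`. -/
theorem stmt5 :
    ∃ C : ℝ, 0 < C ∧
      ∀ (w : ℝ → ℝ) (φ : ℝ → Pt → ℂ),
        LocallyLipschitz w → (∀ q : ℝ, 0 ≤ w q) →
        (∀ q : ℝ, q ≤ 0 → deriv w q ≤ 0) → (∀ q : ℝ, 0 < q → deriv w q = 0) →
        Smooth2 φ →
        (∀ t : ℝ, Tendsto (fun x : Pt => rad x ^ ((3 : ℝ) / 2) * ‖φ t x‖)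
          (Filter.cocompact Pt) (𝓝 0)) →
        ∀ t : ℝ,
          Integrable (fun x : Pt => hDens φ t x * w (rad x - t)) →
          (∫ x : Pt, (jb (t - rad x) ^ 2 / rad x ^ 2) * ‖φ t x‖ ^ 2 * w (rad x - t))
            ≤ C * ∫ x : Pt, hDens φ t x * w (rad x - t) := by
  refine ⟨16, by norm_num, ?_⟩
  intro w φ hw hw0 h1 h2 hφ hdec t hint
  have hφt : ContDiff ℝ 1 (φ t) := by
    have h : ContDiff ℝ 1 (Function.uncurry φ) := hφ.of_le (by exact_mod_cast le_top)
    exact h.comp (contDiff_prodMk_right t)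
  have hφc : Continuous (φ t) := hφt.continuous
  have hwc := hw.continuous
  have hnn : ∀ x : Pt, 0 ≤ hDens φ t x * w (rad x - t) :=
    fun x => mul_nonneg (aux_hDens_nonneg φ t x) (hw0 _)
  have hnl : ∀ x : Pt, 0 ≤ (jb (t - rad x) ^ 2 / rad x ^ 2) * ‖φ t x‖ ^ 2 * w (rad x - t) :=
    fun x => mul_nonneg (by positivity) (hw0 _)
  have hradc : Continuous rad := continuous_norm
  have hjbc : Continuous jb := by unfold jb; fun_prop
  have hmeas : Measurable
      (fun x : Pt => (jb (t - rad x) ^ 2 / rad x ^ 2) * ‖φ t x‖ ^ 2 * w (rad x - t)) := by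
    have m1 : Measurable (fun x : Pt => jb (t - rad x) ^ 2) :=
      (by fun_prop : Continuous (fun x : Pt => jb (t - rad x) ^ 2)).measurable
    have m2 : Measurable (fun x : Pt => rad x ^ 2) :=
      (by fun_prop : Continuous (fun x : Pt => rad x ^ 2)).measurable
    have m3 : Measurable (fun x : Pt => ‖φ t x‖ ^ 2) :=
      (by fun_prop : Continuous (fun x : Pt => ‖φ t x‖ ^ 2)).measurable
    have m4 : Measurable (fun x : Pt => w (rad x - t)) :=
      (by fun_prop : Continuous (fun x : Pt => w (rad x - t))).measurable
    exact ((m1.div m2).mul m3).mul m4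
  have hR : AEMeasurable (fun x : Pt => ENNReal.ofReal (hDens φ t x * w (rad x - t))) :=
    hint.aestronglyMeasurable.aemeasurable.ennreal_ofReal
  have hle : ∫⁻ x : Pt, ENNReal.ofReal
        ((jb (t - rad x) ^ 2 / rad x ^ 2) * ‖φ t x‖ ^ 2 * w (rad x - t))
      ≤ ∫⁻ x : Pt, 16 * ENNReal.ofReal (hDens φ t x * w (rad x - t)) := by
    rw [aux_polar _ hmeas.ennreal_ofReal.aemeasurable, aux_polar _ (hR.const_mul 16)]
    refine lintegral_mono fun ω => ?_
    exact aux_ray w φ hw hw0 h1 h2 t hφt (hdec t) ω (by simp)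
  rw [lintegral_const_mul'' _ hR] at hle
  rw [integral_eq_lintegral_of_nonneg_ae (ae_of_all _ hnl) hmeas.aestronglyMeasurable,
    integral_eq_lintegral_of_nonneg_ae (ae_of_all _ hnn) hint.aestronglyMeasurable]
  have hfin : ∫⁻ x : Pt, ENNReal.ofReal (hDens φ t x * w (rad x - t)) ≠ ⊤ :=
    hint.lintegral_lt_top.ne
  have := ENNReal.toReal_mono (ENNReal.mul_ne_top (by norm_num) hfin) hle
  simpa [ENNReal.toReal_mul] using this
end
end
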